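/- Fix real κ > 0 and η > 0. For every a ∈ (0, 1/2) and every M > 20 there exist f₀ > 0 and C > 0 such that for all f ∈ (0, f₀) and every z = re^{iθ} with r > f^a and −2π/3 + r^{−3/2}·M·f·log(r + f⁻¹) < θ < −r^{−3/2}·M·f·log(r + f⁻¹), one has |D_f(z) − F₁(z)| ≤ C·|F₁(z)|/log(r + f⁻¹), where F₁(z) = (g_{η/κ}(2κ·z^{1/2})/(2zη²))·exp(i·4z^{3/2}/(3f) + i·fκ²/(2z^{1/2})) is evaluated with the branch z^{1/2} = r^{1/2}e^{iθ/2}, z^{3/2} = r^{3/2}e^{3iθ/2} (log denotes the natural logarithm). -/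

import Mathlib

open Real

/-- Taylor coefficients of the Airy function `Ai`:
`a₀ = 3^{−2/3}/Γ(2/3)`, `a₁ = −3^{−1/3}/Γ(1/3)`, `a₂ = 0`,
`a_{k+3} = a_k/((k+3)(k+2))`. -/
noncomputable def airyCoeff : ℕ → ℂ
  | 0 => (3 : ℂ) ^ (-(2 : ℂ) / 3) / Complex.Gamma (2 / 3)
  | 1 => -((3 : ℂ) ^ (-(1 : ℂ) / 3) / Complex.Gamma (1 / 3))
  | 2 => 0
  | (k + 3) => airyCoeff k / (((k : ℂ) + 3) * ((k : ℂ) + 2))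

/-- The Airy function `Ai`, as the entire function with the above Taylor
coefficients at `0`. -/
noncomputable def Ai (z : ℂ) : ℂ := ∑' k : ℕ, airyCoeff k * z ^ k

/-- `ω = e^{2πi/3}` -/
noncomputable def ωc : ℂ := Complex.exp (2 * π * Complex.I / 3)

/-- `W = f^{1/3}·e^{−iπ/6}/(2π)` -/
noncomputable def Wf (f : ℝ) : ℂ :=
  ((f ^ ((1 : ℝ) / 3) : ℝ) : ℂ) * Complex.exp (-(π : ℂ) * Complex.I / 6) / (2 * π)

/-- `α₊(z) = Ai(−ω(z − κf)f^{−2/3})·Ai(−(z − κf)f^{−2/3})` -/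
noncomputable def alphaP (κ f : ℝ) (z : ℂ) : ℂ :=
  Ai (-ωc * (z - κ * f) * ((f ^ (-(2 : ℝ) / 3) : ℝ) : ℂ)) *
    Ai (-(z - κ * f) * ((f ^ (-(2 : ℝ) / 3) : ℝ) : ℂ))

/-- `α₋(z) = Ai(−ω(z + κf)f^{−2/3})·Ai(−(z + κf)f^{−2/3})` -/
noncomputable def alphaM (κ f : ℝ) (z : ℂ) : ℂ :=
  Ai (-ωc * (z + κ * f) * ((f ^ (-(2 : ℝ) / 3) : ℝ) : ℂ)) *
    Ai (-(z + κ * f) * ((f ^ (-(2 : ℝ) / 3) : ℝ) : ℂ))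

/-- `β₊(z) = Ai(−ω(z + κf)f^{−2/3})·Ai(−(z − κf)f^{−2/3})` -/
noncomputable def betaP (κ f : ℝ) (z : ℂ) : ℂ :=
  Ai (-ωc * (z + κ * f) * ((f ^ (-(2 : ℝ) / 3) : ℝ) : ℂ)) *
    Ai (-(z - κ * f) * ((f ^ (-(2 : ℝ) / 3) : ℝ) : ℂ))

/-- `β₋(z) = Ai(−ω(z − κf)f^{−2/3})·Ai(−(z + κf)f^{−2/3})` -/
noncomputable def betaM (κ f : ℝ) (z : ℂ) : ℂ :=
  Ai (-ωc * (z - κ * f) * ((f ^ (-(2 : ℝ) / 3) : ℝ) : ℂ)) *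
    Ai (-(z + κ * f) * ((f ^ (-(2 : ℝ) / 3) : ℝ) : ℂ))

/-- The resonance determinant `D_f` of the Stark Hamiltonian
`p² + fx + η⁻¹(δ_κ + δ_{−κ})`:
`D_f(z) = 1 + (α₊ + α₋)/(ηW) + β₊(β₋ − β₊)/(η²W²)`. -/
noncomputable def Df (κ η f : ℝ) (z : ℂ) : ℂ :=
  1 + (alphaP κ f z + alphaM κ f z) / (η * Wf f)
    + betaP κ f z * (betaM κ f z - betaP κ f z) / (η ^ 2 * (Wf f) ^ 2)

/-- `g_b(w) = sin(w) + b·w·cos(w)` -/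
noncomputable def gb (b : ℝ) (w : ℂ) : ℂ :=
  Complex.sin w + (b : ℂ) * w * Complex.cos w

/-! Write `z ± κ f = q_±²`. In cones around the positive axis `Ai (s²)` equals
`e^{-2 s³ / 3} / (2 √π √s)` up to a factor `1 + O(|s|⁻³)`, by a Gaussian approximation of its
contour integral. In each half of the sector two of the three rotated Airy functions with arguments
proportional to `q_±²` lie in such cones, one dominant and one recessive, and the connection formula
eliminates the third. The products quadratic in the dominant solutions give `F₁` up to a relative
error `O(f (1 + |q|) / |q|³)`. The remaining products are exponentially smaller: since the
distance to the boundary rays is logarithmic, the phase of `F₁` has real part at least a multiple of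
`log (r + 1 / f)`, which gains a factor `f / |q|³`.

Multiplying `g_b (w)` by the conjugate of `cos w` separates its two terms and bounds `|g_b (w)|`
from below in terms of `e^{|Im w|}`. The bound degenerates only near the real zeros of `g_b`, from
which the same logarithmic distance keeps the sector away, so that the absolute error becomes a
relative error `O(1 / log (r + 1 / f))`. -/

section RootOfUnity

open Complex (I)

/-- The primitive 12th root of unity `e^{iπ/6}`: all rotations `ω = ζ₁₂⁴`, `-1 = ζ₁₂⁶`, `i = ζ₁₂³`
of the Airy variable are powers of it. -/
noncomputable def ζ₁₂ : ℂ := Complex.exp (π / 6 * I)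

lemma ζ₁₂_ne_zero : ζ₁₂ ≠ 0 := Complex.exp_ne_zero _

lemma norm_ζ₁₂ : ‖ζ₁₂‖ = 1 := by
  simpa [ζ₁₂] using Complex.norm_exp_ofReal_mul_I (π / 6)

lemma ζ₁₂_pow_three : ζ₁₂ ^ 3 = I := by
  rw [ζ₁₂, ← Complex.exp_nat_mul]
  refine Eq.trans ?_ Complex.exp_pi_div_two_mul_I
  ring_nf

lemma ζ₁₂_pow_six : ζ₁₂ ^ 6 = -1 := by
  rw [show ζ₁₂ ^ 6 = (ζ₁₂ ^ 3) ^ 2 by ring, ζ₁₂_pow_three, Complex.I_sq]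

lemma ζ₁₂_sq_pow_three : (ζ₁₂ ^ 2) ^ 3 = -1 := by rw [← pow_mul, ζ₁₂_pow_six]

lemma ζ₁₂_inv_sq_pow_three : (ζ₁₂⁻¹ ^ 2) ^ 3 = -1 := by
  rw [← pow_mul, inv_pow, ζ₁₂_pow_six]
  norm_num

lemma ωc_eq_ζ₁₂_pow_four : ωc = ζ₁₂ ^ 4 := by
  rw [ωc, ζ₁₂, ← Complex.exp_nat_mul]
  ring_nf

lemma ζ₁₂_sq_eq : ζ₁₂ ^ 2 = 1 / 2 + (√3 / 2 : ℝ) * I := by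
  rw [ζ₁₂, ← Complex.exp_nat_mul, show ((2 : ℕ) : ℂ) * (π / 6 * I) = (π / 3 : ℝ) * I by
    push_cast; ring, Complex.exp_mul_I, ← Complex.ofReal_cos, ← Complex.ofReal_sin,
    Real.cos_pi_div_three, Real.sin_pi_div_three]
  push_cast
  ring

lemma one_add_ζ₁₂_pow_four : 1 + ζ₁₂ ^ 4 = ζ₁₂ ^ 2 := by
  have hσ : ((√3 / 2 : ℝ) : ℂ) ^ 2 = 3 / 4 := by
    rw [← Complex.ofReal_pow, div_pow, Real.sq_sqrt (by norm_num)]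
    push_cast; norm_num
  rw [show ζ₁₂ ^ 4 = (ζ₁₂ ^ 2) ^ 2 by ring, ζ₁₂_sq_eq]
  linear_combination ((√3 / 2 : ℝ) : ℂ) ^ 2 * Complex.I_sq - hσ

lemma ζ₁₂_inv_sq_eq : ζ₁₂⁻¹ ^ 2 = 1 / 2 + (-(√3 / 2) : ℝ) * I := by
  have h : ζ₁₂⁻¹ ^ 2 = 1 - ζ₁₂ ^ 2 := by
    rw [inv_pow, inv_eq_iff_eq_inv, eq_comm, inv_eq_iff_eq_inv]
    refine eq_inv_of_mul_eq_one_left ?_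
    linear_combination -one_add_ζ₁₂_pow_four
  rw [h, ζ₁₂_sq_eq]
  push_cast
  ring

end RootOfUnity

section AiryIntegral

open MeasureTheory Filter Topology Set
open Complex (I)

/-- The moments `∫₀^∞ sᵏ e^{-s³/3} ds`, to which the Taylor coefficients of `Ai` reduce. -/
noncomputable def airyMoment (k : ℕ) : ℝ :=
  ∫ s in Ioi (0 : ℝ), s ^ k * Real.exp (-(s ^ 3 / 3))

lemma airyMoment_eq_rpow_mul_Gamma (k : ℕ) :
    airyMoment k = (3 : ℝ) ^ (((k : ℝ) - 2) / 3) * Real.Gamma ((k + 1) / 3) := by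
  have h := integral_rpow_mul_exp_neg_mul_rpow (p := 3) (q := k) (b := 1 / 3) (by norm_num)
    (by linarith [Nat.cast_nonneg (α := ℝ) k]) (by norm_num)
  have h3 : (1 / 3 : ℝ) ^ (-((k : ℝ) + 1) / 3) * (1 / 3) = (3 : ℝ) ^ (((k : ℝ) - 2) / 3) := by
    rw [one_div, Real.inv_rpow (by norm_num), ← Real.rpow_neg (by norm_num),
      ← Real.rpow_neg_one, ← Real.rpow_add (by norm_num)]
    ring_nf
  rw [airyMoment, ← h3, ← h]
  refine setIntegral_congr_fun measurableSet_Ioi fun s _ => ?_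
  simp only [Real.rpow_natCast]
  rw [show (3 : ℝ) = ((3 : ℕ) : ℝ) by norm_num, Real.rpow_natCast]
  push_cast
  ring_nf

lemma airyMoment_add_three (k : ℕ) : airyMoment (k + 3) = (k + 1) * airyMoment k := by
  rw [airyMoment_eq_rpow_mul_Gamma, airyMoment_eq_rpow_mul_Gamma]
  push_cast
  rw [show ((k : ℝ) + 3 + 1) / 3 = (k + 1) / 3 + 1 by ring, Real.Gamma_add_one (by positivity),
    show ((k : ℝ) + 3 - 2) / 3 = (k - 2) / 3 + 1 by ring,
    Real.rpow_add (by norm_num), Real.rpow_one]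
  ring

lemma neg_one_pow_mul_airyMoment_add_three (k : ℕ) :
    ((-1) ^ (k + 3) / (k + 3).factorial * airyMoment (k + 3) : ℂ) =
      -((-1) ^ k / k.factorial * airyMoment k) / ((k + 3) * (k + 2)) := by
  have h1 : (k : ℂ) + 1 ≠ 0 := by exact_mod_cast k.succ_ne_zero
  have h2 : (k : ℂ) + 2 ≠ 0 := by exact_mod_cast (k + 1).succ_ne_zero
  have h3 : (k : ℂ) + 3 ≠ 0 := by exact_mod_cast (k + 2).succ_ne_zero
  have hfac : ((k + 3).factorial : ℂ) = (k + 3) * (k + 2) * (k + 1) * k.factorial := by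
    simp only [Nat.factorial_succ]
    push_cast
    ring
  rw [airyMoment_add_three, hfac]
  push_cast
  field_simp
  ring

lemma inv_Gamma_eq_reflection {s : ℝ} (hs : Real.sin (π * s) ≠ 0) :
    (Complex.Gamma (1 - s))⁻¹ = (Real.Gamma s * Real.sin (π * s) / π : ℝ) := by
  have h := Complex.Gamma_mul_Gamma_one_sub s
  have hsin : (Real.sin (π * s) : ℂ) ≠ 0 := by exact_mod_cast hs
  have hpi : (π : ℂ) ≠ 0 := by exact_mod_cast Real.pi_ne_zero
  refine inv_eq_of_mul_eq_one_right ?_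
  rw [← Complex.ofReal_mul, ← Complex.ofReal_sin, eq_div_iff hsin] at h
  push_cast at h ⊢
  rw [← Complex.Gamma_ofReal]
  generalize Complex.sin (π * s) = S at h ⊢
  field_simp
  linear_combination h

lemma two_pi_I_mul_airyCoeff (k : ℕ) :
    2 * π * I * airyCoeff k = (ζ₁₂ ^ 2) ^ (k + 1) * ((-1) ^ k / k.factorial * airyMoment k) -
      (ζ₁₂⁻¹ ^ 2) ^ (k + 1) * ((-1) ^ k / k.factorial * airyMoment k) := by
  have hpi : (π : ℂ) ≠ 0 := by exact_mod_cast Real.pi_ne_zero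
  have hcast (x : ℝ) : (3 : ℂ) ^ (x : ℂ) = ((3 : ℝ) ^ x : ℝ) := by
    rw [Complex.ofReal_cpow (by norm_num)]; rfl
  have hsin : Real.sin (π * (1 / 3)) = √3 / 2 := by
    rw [← Real.sin_pi_div_three]; ring_nf
  have hsin' : Real.sin (π * (2 / 3)) = √3 / 2 := by
    rw [← Real.sin_pi_div_three, ← Real.sin_pi_sub]; ring_nf
  induction k using airyCoeff.induct with
  | case1 =>
    have hG := inv_Gamma_eq_reflection (s := 1 / 3) (by rw [hsin]; positivity)
    rw [hsin, show (1 : ℂ) - (1 / 3 : ℝ) = 2 / 3 by push_cast; norm_num] at hG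
    rw [airyCoeff, div_eq_mul_inv, hG, airyMoment_eq_rpow_mul_Gamma, ζ₁₂_sq_eq, ζ₁₂_inv_sq_eq,
      show -(2 : ℂ) / 3 = (-2 / 3 : ℝ) by push_cast; ring, hcast]
    norm_num
    field_simp
    ring
  | case2 =>
    have hG := inv_Gamma_eq_reflection (s := 2 / 3) (by rw [hsin']; positivity)
    rw [hsin', show (1 : ℂ) - (2 / 3 : ℝ) = 1 / 3 by push_cast; norm_num] at hG
    rw [airyCoeff, div_eq_mul_inv, hG, airyMoment_eq_rpow_mul_Gamma, ζ₁₂_sq_eq, ζ₁₂_inv_sq_eq,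
      show -(1 : ℂ) / 3 = (-1 / 3 : ℝ) by push_cast; ring, hcast]
    norm_num
    field_simp
    ring
  | case3 =>
    have h : (ζ₁₂⁻¹ ^ 2) ^ (2 + 1) = (ζ₁₂ ^ 2) ^ (2 + 1) :=
      ζ₁₂_inv_sq_pow_three.trans ζ₁₂_sq_pow_three.symm
    rw [airyCoeff, h]
    ring
  | case4 j ih =>
    have hrot : (ζ₁₂ ^ 2) ^ (j + 3 + 1) = -(ζ₁₂ ^ 2) ^ (j + 1) := by
      linear_combination (ζ₁₂ ^ 2) ^ (j + 1) * ζ₁₂_sq_pow_three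
    have hrot' : (ζ₁₂⁻¹ ^ 2) ^ (j + 3 + 1) = -(ζ₁₂⁻¹ ^ 2) ^ (j + 1) := by
      linear_combination (ζ₁₂⁻¹ ^ 2) ^ (j + 1) * ζ₁₂_inv_sq_pow_three
    rw [airyCoeff, mul_div_assoc', ih, hrot, hrot', neg_one_pow_mul_airyMoment_add_three]
    ring

lemma integrableOn_exp_mul_sub_cube {b : ℝ} (hb : 0 ≤ b) :
    IntegrableOn (fun s : ℝ => Real.exp (b * s - s ^ 3 / 3)) (Ioi 0) := by
  have hdom : IntegrableOn (fun s : ℝ => Real.exp (3 * (b + 1) ^ 2) * Real.exp (-s)) (Ioi 0) :=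
    (integrableOn_exp_neg_Ioi 0).const_mul _
  refine Integrable.mono' hdom (by fun_prop) ?_
  filter_upwards [ae_restrict_mem measurableSet_Ioi] with s hs
  have hs0 : (0 : ℝ) < s := hs
  rw [Real.norm_of_nonneg (Real.exp_pos _).le, ← Real.exp_add, Real.exp_le_exp]
  rcases le_total s (3 * (b + 1)) with h | h
  · have : 0 ≤ s ^ 3 := by positivity
    nlinarith [mul_le_mul_of_nonneg_left h (by linarith : 0 ≤ b + 1)]
  · have h1 : 3 * (b + 1) ≤ s ^ 2 := by nlinarith
    nlinarith [mul_le_mul_of_nonneg_left h1 hs0.le, sq_nonneg (b + 1)]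

/-- The integrand `e^{t³/3 - xt}` of the contour representation of `Ai`. -/
noncomputable def airyKernel (x t : ℂ) : ℂ := Complex.exp (t ^ 3 / 3 - x * t)

lemma differentiable_airyKernel (x : ℂ) : Differentiable ℂ (airyKernel x) := by
  unfold airyKernel
  fun_prop

lemma continuous_airyKernel (x : ℂ) : Continuous (airyKernel x) :=
  (differentiable_airyKernel x).continuous

/-- The contour integral of `airyKernel` along the ray from `0` in the direction `c`. -/
noncomputable def airyRay (x c : ℂ) : ℂ := ∫ s in Ioi (0 : ℝ), c * airyKernel x (c * s)

lemma airyKernel_ray (x : ℂ) {c : ℂ} (hc : c ^ 3 = -1) (s : ℝ) :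
    airyKernel x (c * s) = Complex.exp (-(x * c) * s) * Real.exp (-(s ^ 3 / 3)) := by
  rw [airyKernel, Complex.ofReal_exp, ← Complex.exp_add]
  congr 1
  push_cast
  linear_combination (s : ℂ) ^ 3 / 3 * hc

lemma integrableOn_airyKernel_ray (x : ℂ) {c : ℂ} (hc : c ^ 3 = -1) :
    IntegrableOn (fun s : ℝ => c * airyKernel x (c * s)) (Ioi 0) := by
  have hcont := continuous_airyKernel x
  refine Integrable.const_mul (Integrable.mono' (integrableOn_exp_mul_sub_cube
    (norm_nonneg (x * c))) (by fun_prop) ?_) c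
  filter_upwards [ae_restrict_mem measurableSet_Ioi] with s hs
  rw [airyKernel_ray x hc, norm_mul, Complex.norm_exp, Complex.norm_real,
    Real.norm_of_nonneg (Real.exp_pos _).le, ← Real.exp_add, Real.exp_le_exp, ← sub_eq_add_neg]
  gcongr
  refine (Complex.re_le_norm _).trans_eq ?_
  rw [norm_mul, norm_neg, Complex.norm_real, Real.norm_of_nonneg (le_of_lt hs)]

lemma hasSum_airyRay (x : ℂ) {c : ℂ} (hc : c ^ 3 = -1) :
    HasSum (fun k : ℕ => c ^ (k + 1) * ((-1) ^ k / k.factorial * airyMoment k) * x ^ k)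
      (airyRay x c) := by
  have key := hasSum_integral_of_dominated_convergence (μ := volume.restrict (Ioi (0 : ℝ)))
    (F := fun (k : ℕ) (s : ℝ) =>
      (-(x * c)) ^ k / k.factorial * ((s ^ k * Real.exp (-(s ^ 3 / 3)) : ℝ) : ℂ))
    (f := fun s : ℝ => airyKernel x (c * s))
    (fun k s => (‖x * c‖ * s) ^ k / k.factorial * Real.exp (-(s ^ 3 / 3)))
    (fun k => by fun_prop) ?_ ?_ ?_ ?_
  · rw [airyRay, integral_const_mul]
    refine (key.mul_left c).congr_fun fun k => ?_
    rw [integral_const_mul, integral_complex_ofReal, ← airyMoment, neg_pow (x * c), mul_pow]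
    ring
  · intro k
    filter_upwards [ae_restrict_mem measurableSet_Ioi] with s hs
    have hs0 : (0 : ℝ) < s := hs
    refine le_of_eq ?_
    simp only [norm_mul, norm_div, norm_pow, norm_neg, Complex.norm_natCast, Complex.norm_real]
    rw [Real.norm_of_nonneg hs0.le, Real.norm_of_nonneg (Real.exp_pos _).le, mul_pow]
    ring
  · exact ae_of_all _ fun s => (Real.summable_pow_div_factorial _).mul_right _
  · have hsum (s : ℝ) : ∑' k : ℕ, (‖x * c‖ * s) ^ k / k.factorial * Real.exp (-(s ^ 3 / 3)) =
        Real.exp (‖x * c‖ * s - s ^ 3 / 3) := by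
      rw [tsum_mul_right, sub_eq_add_neg, Real.exp_add, Real.exp_eq_exp_ℝ,
        NormedSpace.exp_eq_tsum_div]
    simp_rw [hsum]
    exact integrableOn_exp_mul_sub_cube (norm_nonneg _)
  · refine ae_of_all _ fun s => ?_
    have hexp := (NormedSpace.expSeries_div_hasSum_exp (-(x * c) * s : ℂ)).mul_right
      ((Real.exp (-(s ^ 3 / 3)) : ℝ) : ℂ)
    rw [← Complex.exp_eq_exp_ℂ, ← airyKernel_ray x hc] at hexp
    refine hexp.congr_fun fun k => ?_
    push_cast
    rw [mul_pow]
    ring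

lemma hasSum_two_pi_I_mul_airyCoeff (x : ℂ) :
    HasSum (fun k : ℕ => 2 * π * I * (airyCoeff k * x ^ k))
      (airyRay x (ζ₁₂ ^ 2) - airyRay x (ζ₁₂⁻¹ ^ 2)) := by
  refine ((hasSum_airyRay x ζ₁₂_sq_pow_three).sub
    (hasSum_airyRay x ζ₁₂_inv_sq_pow_three)).congr_fun fun k => ?_
  linear_combination x ^ k * two_pi_I_mul_airyCoeff k

lemma hasSum_Ai (x : ℂ) : HasSum (fun k : ℕ => airyCoeff k * x ^ k) (Ai x) :=
  ((summable_mul_left_iff Complex.two_pi_I_ne_zero).mp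
    (hasSum_two_pi_I_mul_airyCoeff x).summable).hasSum

lemma two_pi_I_mul_Ai (x : ℂ) :
    2 * π * I * Ai x = airyRay x (ζ₁₂ ^ 2) - airyRay x (ζ₁₂⁻¹ ^ 2) :=
  ((hasSum_Ai x).mul_left _).unique (hasSum_two_pi_I_mul_airyCoeff x)

lemma norm_airyKernel_le (x : ℂ) (u v : ℝ) :
    ‖airyKernel x (u + v * I)‖ ≤ Real.exp (u ^ 3 / 3 - u * v ^ 2 + ‖x‖ * (|u| + |v|)) := by
  rw [airyKernel, Complex.norm_exp, Real.exp_le_exp, Complex.sub_re]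
  have hcube : (((u : ℂ) + v * I) ^ 3 / 3).re = u ^ 3 / 3 - u * v ^ 2 := by
    have h : ((u : ℂ) + v * I) ^ 3 / 3 =
        ((u ^ 3 / 3 - u * v ^ 2 : ℝ) : ℂ) + ((u ^ 2 * v - v ^ 3 / 3 : ℝ) : ℂ) * I := by
      push_cast
      linear_combination (u * v ^ 2 + v ^ 3 * I / 3) * Complex.I_sq
    rw [h, Complex.add_re, Complex.re_ofReal_mul, Complex.I_re, Complex.ofReal_re]
    ring
  have hlin : -(x * (u + v * I)).re ≤ ‖x‖ * (|u| + |v|) := by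
    refine ((neg_le_abs _).trans (Complex.abs_re_le_norm _)).trans ?_
    rw [norm_mul]
    gcongr
    exact (norm_add_le _ _).trans (by simp)
  linarith

lemma integrable_airyKernel_vertical (x : ℂ) {p : ℝ} (hp : 0 < p) :
    Integrable fun v : ℝ => airyKernel x (p + v * I) := by
  have hcont := continuous_airyKernel x
  have hdom : Integrable fun v : ℝ =>
      Real.exp (p ^ 3 / 3 + ‖x‖ * p + ‖x‖ ^ 2 / (2 * p)) * Real.exp (-(p / 2) * v ^ 2) :=
    (integrable_exp_neg_mul_sq (by positivity)).const_mul _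
  refine hdom.mono' (by fun_prop) (ae_of_all _ fun v => (norm_airyKernel_le x p v).trans ?_)
  rw [← Real.exp_add, Real.exp_le_exp, abs_of_pos hp]
  have hyoung : ‖x‖ * |v| ≤ p / 2 * v ^ 2 + ‖x‖ ^ 2 / (2 * p) := by
    have h1 : ‖x‖ ^ 2 / (2 * p) = (‖x‖ / p) ^ 2 * (p / 2) := by field_simp
    have h2 : ‖x‖ * |v| = (‖x‖ / p) * |v| * p := by field_simp
    rw [h1, h2, ← sq_abs v]
    nlinarith [mul_nonneg hp.le (sq_nonneg (‖x‖ / p - |v|))]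
  linarith

lemma integral_mul_comp_line {F g : ℂ → ℂ} (hF : ∀ t, HasDerivAt F (g t) t) (hg : Continuous g)
    (z c : ℂ) (a b : ℝ) :
    ∫ s in a..b, c * g (z + c * s) = F (z + c * b) - F (z + c * a) := by
  refine intervalIntegral.integral_eq_sub_of_hasDerivAt (f := fun s : ℝ => F (z + c * s))
    (fun s _ => ?_) (Continuous.intervalIntegrable (by fun_prop) _ _)
  have hline : HasDerivAt (fun s : ℝ => z + c * (s : ℂ)) c s := by
    simpa using ((Complex.ofRealCLM.hasDerivAt (x := s)).const_mul c).const_add z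
  rw [mul_comm]
  exact (hF _).comp s hline

lemma tendsto_exp_neg_sq_mul {p : ℝ} (hp : 0 < p) (b : ℝ) :
    Tendsto (fun S : ℝ => Real.exp (-(p * S ^ 2) + b * S) * S) atTop (𝓝 0) := by
  have h : Tendsto (fun S : ℝ => S ^ 1 * Real.exp (-S)) atTop (𝓝 0) :=
    Real.tendsto_pow_mul_exp_neg_atTop_nhds_zero 1
  refine squeeze_zero' ?_ ?_ h
  · filter_upwards [eventually_ge_atTop 0] with S hS
    positivity
  · filter_upwards [eventually_ge_atTop 0, eventually_ge_atTop ((b + 1) / p)] with S hS hSb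
    rw [pow_one, mul_comm S]
    gcongr
    rw [div_le_iff₀ hp] at hSb
    nlinarith

lemma norm_airyKernel_segment_le (x : ℂ) {p σ S u : ℝ} (hp : 0 < p) (hσ : σ ^ 2 = 3 / 4)
    (hpu : p ≤ u) (huS : u ≤ S / 2) :
    ‖airyKernel x (u + (σ * S : ℝ) * I)‖ ≤ Real.exp (-(2 / 3 * p * S ^ 2) + 2 * ‖x‖ * S) := by
  have hσ1 : |σ| ≤ 1 := by rw [← sq_le_one_iff_abs_le_one]; norm_num [hσ]
  have hu : 0 < u := hp.trans_le hpu
  have hS : 0 < S := by linarith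
  refine (norm_airyKernel_le x u (σ * S)).trans (Real.exp_le_exp.mpr ?_)
  have hlin : |u| + |σ * S| ≤ 2 * S := by
    rw [abs_of_pos hu, abs_mul, abs_of_pos hS]
    nlinarith
  have hcube : u ^ 3 / 3 - u * (σ * S) ^ 2 ≤ -(2 / 3 * p * S ^ 2) := by
    have hsq : u ^ 2 ≤ (S / 2) ^ 2 := by gcongr
    rw [mul_pow, hσ]
    nlinarith [mul_le_mul_of_nonneg_left hsq hu.le, mul_le_mul_of_nonneg_right hpu (sq_nonneg S)]
  nlinarith [mul_le_mul_of_nonneg_left hlin (norm_nonneg x)]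

lemma tendsto_primitive_vertical_sub_ray (x : ℂ) {p σ : ℝ} (hp : 0 < p) (hσ : σ ^ 2 = 3 / 4)
    {F : ℂ → ℂ} (hF : ∀ t, HasDerivAt F (airyKernel x t) t) :
    Tendsto (fun S : ℝ => F (p + (σ * S : ℝ) * I) - F ((1 / 2 + σ * I) * S)) atTop (𝓝 0) := by
  refine squeeze_zero_norm' ?_ (tendsto_exp_neg_sq_mul (p := 2 / 3 * p) (by positivity) (2 * ‖x‖))
  filter_upwards [eventually_ge_atTop (2 * p)] with S hS
  have hend : (1 / 2 + σ * I) * (S : ℂ) = (σ * S : ℝ) * I + 1 * (S / 2 : ℝ) := by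
    push_cast; ring
  have hbound : ∀ u ∈ uIoc (S / 2) p, ‖1 * airyKernel x ((σ * S : ℝ) * I + 1 * u)‖ ≤
      Real.exp (-(2 / 3 * p * S ^ 2) + 2 * ‖x‖ * S) := by
    intro u hu
    rw [uIoc_of_ge (by linarith)] at hu
    rw [one_mul, one_mul, add_comm]
    exact norm_airyKernel_segment_le x hp hσ hu.1.le hu.2
  rw [show (p : ℂ) + (σ * S : ℝ) * I = (σ * S : ℝ) * I + 1 * p by ring, hend,
    ← integral_mul_comp_line hF (continuous_airyKernel x)]
  refine (intervalIntegral.norm_integral_le_of_norm_le_const hbound).trans ?_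
  gcongr
  rw [abs_of_nonpos (by linarith)]
  linarith

lemma tendsto_primitive_ray (x : ℂ) {c : ℂ} (hc : c ^ 3 = -1) {F : ℂ → ℂ}
    (hF : ∀ t, HasDerivAt F (airyKernel x t) t) :
    Tendsto (fun S : ℝ => F (c * S) - F 0) atTop (𝓝 (airyRay x c)) := by
  refine (intervalIntegral_tendsto_integral_Ioi 0 (integrableOn_airyKernel_ray x hc)
    tendsto_id).congr fun S => ?_
  simpa using integral_mul_comp_line hF (continuous_airyKernel x) 0 c 0 S

lemma integral_airyKernel_vertical (x : ℂ) {p : ℝ} (hp : 0 < p) :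
    ∫ v : ℝ, airyKernel x (p + v * I) = 2 * π * Ai x := by
  obtain ⟨F, hF'⟩ := (differentiable_airyKernel x).isExactOn_univ
  have hF : ∀ t, HasDerivAt F (airyKernel x t) t := fun t => hF' t (mem_univ t)
  have hσ : (√3 / 2 : ℝ) ^ 2 = 3 / 4 := by
    rw [div_pow, Real.sq_sqrt (by norm_num)]; norm_num
  have hup := (tendsto_primitive_vertical_sub_ray x hp hσ hF).add
    (ζ₁₂_sq_eq ▸ tendsto_primitive_ray x ζ₁₂_sq_pow_three hF)
  have hdown := (tendsto_primitive_vertical_sub_ray x hp ((neg_sq _).trans hσ) hF).add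
    (ζ₁₂_inv_sq_eq ▸ tendsto_primitive_ray x ζ₁₂_inv_sq_pow_three hF)
  have hrays := hup.sub hdown
  rw [zero_add, zero_add, ← ζ₁₂_sq_eq, ← ζ₁₂_inv_sq_eq, ← two_pi_I_mul_Ai] at hrays
  have hS : Tendsto (fun S : ℝ => √3 / 2 * S) atTop atTop :=
    tendsto_id.const_mul_atTop (by positivity)
  have hvert := (intervalIntegral_tendsto_integral (integrable_airyKernel_vertical x hp)
    (tendsto_neg_atTop_atBot.comp hS) hS).const_mul I
  refine mul_left_cancel₀ Complex.I_ne_zero ((tendsto_nhds_unique (hvert.congr fun S => ?_)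
    hrays).trans (by ring))
  have hFTC := integral_mul_comp_line hF (continuous_airyKernel x) p I (-(√3 / 2 * S))
    (√3 / 2 * S)
  simp only [Function.comp_apply, ← intervalIntegral.integral_const_mul]
  rw [show (∫ v in -(√3 / 2 * S)..√3 / 2 * S, I * airyKernel x (p + v * I)) =
    ∫ v in -(√3 / 2 * S)..√3 / 2 * S, I * airyKernel x (p + I * v) by simp only [mul_comm I], hFTC]
  push_cast
  ring_nf

lemma Ai_sq_eq_integral {s : ℂ} (hs : 0 < s.re) :
    Ai (s ^ 2) = 1 / (2 * π) * Complex.exp (-(2 / 3 * s ^ 3)) *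
      ∫ v : ℝ, Complex.exp (-s * v ^ 2) * Complex.exp (-(v ^ 3 / 3 : ℝ) * I) := by
  have h := integral_airyKernel_vertical (s ^ 2) hs
  rw [← integral_add_right_eq_self _ s.im] at h
  have hker (v : ℝ) : airyKernel (s ^ 2) (s.re + ((v + s.im : ℝ) : ℂ) * I) =
      Complex.exp (-(2 / 3 * s ^ 3)) *
        (Complex.exp (-s * v ^ 2) * Complex.exp (-(v ^ 3 / 3 : ℝ) * I)) := by
    have hshift : (s.re : ℂ) + ((v + s.im : ℝ) : ℂ) * I = s + v * I := by
      conv_rhs => rw [← Complex.re_add_im s]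
      push_cast; ring
    rw [hshift, airyKernel, ← Complex.exp_add, ← Complex.exp_add]
    congr 1
    push_cast
    linear_combination (s * v ^ 2 + v ^ 3 * I / 3) * Complex.I_sq
  simp_rw [hker] at h
  rw [integral_const_mul] at h
  have hpi : (π : ℂ) ≠ 0 := by exact_mod_cast Real.pi_ne_zero
  rw [mul_assoc, h]
  field_simp

lemma integral_gaussian_mul_exp_odd {s : ℂ} (hs : 0 < s.re) {g : ℝ → ℝ} (hg : Continuous g)
    (hodd : ∀ v, g (-v) = -g v) :
    ∫ v : ℝ, Complex.exp (-s * v ^ 2) * Complex.exp (-(g v : ℝ) * I) =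
      ∫ v : ℝ, Complex.exp (-s * v ^ 2) * (Real.cos (g v) : ℝ) := by
  have hint : Integrable fun v : ℝ => Complex.exp (-s * v ^ 2) * Complex.exp (g v * I) :=
    (integrable_cexp_neg_mul_sq hs).mono (by fun_prop) (ae_of_all _ fun v => by
      rw [norm_mul, Complex.norm_exp_ofReal_mul_I, mul_one])
  have hrefl : ∫ v : ℝ, Complex.exp (-s * v ^ 2) * Complex.exp (-(g v : ℝ) * I) =
      ∫ v : ℝ, Complex.exp (-s * v ^ 2) * Complex.exp (g v * I) := by
    rw [← integral_neg_eq_self]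
    refine integral_congr_ae (ae_of_all _ fun v => ?_)
    simp only [hodd, Complex.ofReal_neg, neg_neg, neg_sq]
  have hint' : Integrable fun v : ℝ =>
      Complex.exp (-s * v ^ 2) * Complex.exp (-(g v : ℝ) * I) := by
    refine hint.comp_neg.congr (ae_of_all _ fun v => ?_)
    simp only [hodd, Complex.ofReal_neg, neg_sq]
  refine mul_left_cancel₀ (two_ne_zero (α := ℂ)) ?_
  rw [two_mul]
  nth_rw 1 [hrefl]
  rw [← integral_add hint hint', ← integral_const_mul]
  refine integral_congr_ae (ae_of_all _ fun v => ?_)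
  simp only [Complex.ofReal_cos, Complex.cos]
  ring

lemma pow_six_mul_exp_le {c : ℝ} (hc : 0 < c) (v : ℝ) :
    v ^ 6 * Real.exp (-c * v ^ 2) ≤ 48 / c ^ 3 * Real.exp (-(c / 2) * v ^ 2) := by
  have h := Real.pow_div_factorial_le_exp (x := c / 2 * v ^ 2) (by positivity) 3
  calc v ^ 6 * Real.exp (-c * v ^ 2)
      = 48 / c ^ 3 * ((c / 2 * v ^ 2) ^ 3 / (Nat.factorial 3 : ℝ)) * Real.exp (-c * v ^ 2) := by
        rw [show (Nat.factorial 3 : ℝ) = 6 by norm_num [Nat.factorial]]; field_simp; ring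
    _ ≤ 48 / c ^ 3 * Real.exp (c / 2 * v ^ 2) * Real.exp (-c * v ^ 2) := by gcongr
    _ = 48 / c ^ 3 * Real.exp (-(c / 2) * v ^ 2) := by
        rw [mul_assoc, ← Real.exp_add]; ring_nf

lemma norm_gaussian_mul_cos_sub_one_le {s : ℂ} (hs : 0 < s.re) (v : ℝ) :
    ‖Complex.exp (-s * v ^ 2) * (Real.cos (v ^ 3 / 3) - 1 : ℝ)‖ ≤
      8 / 3 / s.re ^ 3 * Real.exp (-(s.re / 2) * v ^ 2) := by
  have hcos : |Real.cos (v ^ 3 / 3) - 1| ≤ v ^ 6 / 18 := by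
    rw [abs_le]
    have h := Real.one_sub_sq_div_two_le_cos (x := v ^ 3 / 3)
    constructor
    · nlinarith
    · linarith [Real.cos_le_one (v ^ 3 / 3), show 0 ≤ v ^ 6 by positivity]
  rw [norm_mul, norm_cexp_neg_mul_sq, Complex.norm_real, Real.norm_eq_abs]
  calc Real.exp (-s.re * v ^ 2) * |Real.cos (v ^ 3 / 3) - 1|
      ≤ Real.exp (-s.re * v ^ 2) * (v ^ 6 / 18) := by gcongr
    _ = 1 / 18 * (v ^ 6 * Real.exp (-s.re * v ^ 2)) := by ring
    _ ≤ 1 / 18 * (48 / s.re ^ 3 * Real.exp (-(s.re / 2) * v ^ 2)) := by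
        gcongr ?_ * ?_
        exact pow_six_mul_exp_le hs v
    _ = _ := by ring

lemma norm_airy_integral_sub_gaussian_le {s : ℂ} (hs : 0 < s.re) :
    ‖(∫ v : ℝ, Complex.exp (-s * v ^ 2) * Complex.exp (-(v ^ 3 / 3 : ℝ) * I)) -
      ∫ v : ℝ, Complex.exp (-s * v ^ 2)‖ ≤ 8 / 3 / s.re ^ 3 * √(2 * π / s.re) := by
  have hG := integrable_cexp_neg_mul_sq hs
  have hcos : Integrable fun v : ℝ => Complex.exp (-s * v ^ 2) * (Real.cos (v ^ 3 / 3) : ℝ) := by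
    refine hG.mono (by fun_prop) (ae_of_all _ fun v => ?_)
    rw [norm_mul, Complex.norm_real]
    exact mul_le_of_le_one_right (norm_nonneg _) (Real.abs_cos_le_one _)
  rw [integral_gaussian_mul_exp_odd hs (by fun_prop) (fun v => by ring), ← integral_sub hcos hG]
  calc ‖∫ v : ℝ, (Complex.exp (-s * v ^ 2) * (Real.cos (v ^ 3 / 3) : ℝ) -
        Complex.exp (-s * v ^ 2))‖
      ≤ ∫ v : ℝ, 8 / 3 / s.re ^ 3 * Real.exp (-(s.re / 2) * v ^ 2) :=
        norm_integral_le_of_norm_le ((integrable_exp_neg_mul_sq (by positivity)).const_mul _)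
          (ae_of_all _ fun v => by
            simpa [mul_sub] using norm_gaussian_mul_cos_sub_one_le hs v)
    _ = 8 / 3 / s.re ^ 3 * √(2 * π / s.re) := by
        rw [integral_const_mul, integral_gaussian]
        congr 2
        field_simp

/-- The leading asymptotic form of `Ai (s ^ 2)` as `s → ∞` in the right half-plane; it equals
`e^{-2s³/3} / (2 √π √s)` with principal roots. -/
noncomputable def airyWKB (s : ℂ) : ℂ :=
  1 / (2 * π) * Complex.exp (-(2 / 3 * s ^ 3)) * (π / s) ^ (1 / 2 : ℂ)

/-- The factor by which `Ai (s ^ 2)` deviates from its leading asymptotic form. -/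
noncomputable def airyCorr (s : ℂ) : ℂ := Ai (s ^ 2) / airyWKB s

lemma airyWKB_ne_zero {s : ℂ} (hs : s ≠ 0) : airyWKB s ≠ 0 := by
  have hpi : (π : ℂ) ≠ 0 := by exact_mod_cast Real.pi_ne_zero
  simp [airyWKB, hs, hpi, Complex.exp_ne_zero, Complex.cpow_eq_zero_iff]

lemma Ai_sq_eq_airyWKB_mul_airyCorr {s : ℂ} (hs : s ≠ 0) :
    Ai (s ^ 2) = airyWKB s * airyCorr s :=
  (mul_div_cancel₀ _ (airyWKB_ne_zero hs)).symm

lemma re_pi_div_pos {s : ℂ} (hs : 0 < s.re) : 0 < (π / s).re := by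
  have hs0 : s ≠ 0 := by rintro rfl; simp at hs
  rw [div_eq_mul_inv, Complex.re_ofReal_mul, Complex.inv_re]
  exact mul_pos Real.pi_pos (div_pos hs (Complex.normSq_pos.mpr hs0))

lemma cpow_half_mul_cpow_half {x y w : ℂ} (hx : 0 < x.re) (hy : 0 < y.re) (hw : 0 < w.re)
    (h : w ^ 2 = x * y) : x ^ (1 / 2 : ℂ) * y ^ (1 / 2 : ℂ) = w := by
  have hx0 : x ≠ 0 := by rintro rfl; simp at hx
  have hy0 : y ≠ 0 := by rintro rfl; simp at hy
  have hargx := abs_lt.mp (Complex.abs_arg_lt_pi_div_two_iff.mpr (Or.inl hx))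
  have hargy := abs_lt.mp (Complex.abs_arg_lt_pi_div_two_iff.mpr (Or.inl hy))
  rw [Complex.cpow_def_of_ne_zero hx0, Complex.cpow_def_of_ne_zero hy0, ← Complex.exp_add,
    ← add_mul, ← Complex.log_mul hx0 hy0 ⟨by linarith, by linarith⟩,
    ← Complex.cpow_def_of_ne_zero (mul_ne_zero hx0 hy0), ← h, one_div, Complex.sq_cpow_two_inv hw]

lemma airyWKB_mul_airyWKB {s t w : ℂ} (hs : 0 < s.re) (ht : 0 < t.re) (hw : 0 < w.re)
    (h : w ^ 2 = s * t) :
    airyWKB s * airyWKB t = Complex.exp (-(2 / 3 * (s ^ 3 + t ^ 3))) / (4 * π * w) := by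
  have hpi : (π : ℂ) ≠ 0 := by exact_mod_cast Real.pi_ne_zero
  have hw0 : w ≠ 0 := by rintro rfl; simp at hw
  have hroot := cpow_half_mul_cpow_half (re_pi_div_pos hs) (re_pi_div_pos ht) (re_pi_div_pos hw)
    (by rw [div_pow, h]; ring)
  rw [airyWKB, airyWKB, mul_mul_mul_comm, hroot, mul_mul_mul_comm, ← Complex.exp_add]
  field_simp
  ring_nf

lemma norm_cpow_half (x : ℂ) : ‖x ^ (1 / 2 : ℂ)‖ = √‖x‖ := by
  rw [eq_comm, Real.sqrt_eq_iff_eq_sq (norm_nonneg _) (norm_nonneg _), ← norm_pow,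
    ← Complex.cpow_nat_mul]
  simp

lemma norm_airyCorr_sub_one_le {s : ℂ} (hs : 0 < s.re) :
    ‖airyCorr s - 1‖ ≤ 8 / 3 / s.re ^ 3 * √(2 * ‖s‖ / s.re) := by
  have hs0 : s ≠ 0 := by rintro rfl; simp at hs
  have hpi : (π : ℂ) ≠ 0 := by exact_mod_cast Real.pi_ne_zero
  have hG0 : (π / s : ℂ) ^ (1 / 2 : ℂ) ≠ 0 := by simp [hs0, hpi, Complex.cpow_eq_zero_iff]
  have hle := norm_airy_integral_sub_gaussian_le hs
  rw [integral_gaussian_complex hs] at hle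
  set J := ∫ v : ℝ, Complex.exp (-s * v ^ 2) * Complex.exp (-(v ^ 3 / 3 : ℝ) * I) with hJ
  have hcorr : airyCorr s - 1 = (J - (π / s) ^ (1 / 2 : ℂ)) / (π / s) ^ (1 / 2 : ℂ) := by
    rw [airyCorr, Ai_sq_eq_integral hs, ← hJ, airyWKB]
    field_simp [Complex.exp_ne_zero]
  have hroot : √(2 * π / s.re) = √(2 * ‖s‖ / s.re) * ‖(π / s : ℂ) ^ (1 / 2 : ℂ)‖ := by
    have hn : ‖s‖ ≠ 0 := norm_ne_zero_iff.mpr hs0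
    rw [norm_cpow_half, ← Real.sqrt_mul (by positivity), norm_div, Complex.norm_real,
      Real.norm_of_nonneg Real.pi_pos.le]
    congr 1
    field_simp
  rw [hcorr, norm_div, div_le_iff₀ (norm_pos_iff.mpr hG0), mul_assoc, ← hroot]
  exact hle

lemma norm_airyCorr_sub_one_le_of_cone {s : ℂ} (hs0 : s ≠ 0) (hs : ‖s‖ / 4 ≤ s.re) :
    ‖airyCorr s - 1‖ ≤ 600 / ‖s‖ ^ 3 := by
  have hn : 0 < ‖s‖ := norm_pos_iff.mpr hs0
  have hre : 0 < s.re := by linarith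
  have hsqrt : √(2 * ‖s‖ / s.re) ≤ 3 := by
    rw [Real.sqrt_le_left (by norm_num), div_le_iff₀ hre]
    linarith
  calc ‖airyCorr s - 1‖ ≤ 8 / 3 / s.re ^ 3 * √(2 * ‖s‖ / s.re) := norm_airyCorr_sub_one_le hre
    _ ≤ 8 / 3 / (‖s‖ / 4) ^ 3 * 3 := by gcongr
    _ = 512 / ‖s‖ ^ 3 := by field_simp; norm_num
    _ ≤ 600 / ‖s‖ ^ 3 := by gcongr; norm_num

end AiryIntegral

section Connection

lemma one_add_ωc_add_sq : 1 + ωc + ωc ^ 2 = 0 := by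
  rw [ωc_eq_ζ₁₂_pow_four]
  linear_combination one_add_ζ₁₂_pow_four + ζ₁₂ ^ 2 * ζ₁₂_pow_six

lemma ωc_pow_three : ωc ^ 3 = 1 := by
  linear_combination (ωc - 1) * one_add_ωc_add_sq

lemma airyCoeff_mul_one_add (k : ℕ) :
    airyCoeff k * (1 + ωc ^ (k + 1) + ωc ^ (2 * (k + 1))) = 0 := by
  induction k using airyCoeff.induct with
  | case1 => linear_combination airyCoeff 0 * one_add_ωc_add_sq
  | case2 => linear_combination airyCoeff 1 * (one_add_ωc_add_sq + ωc * ωc_pow_three)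
  | case3 => rw [airyCoeff, zero_mul]
  | case4 j ih =>
    have hperiod : 1 + ωc ^ (j + 3 + 1) + ωc ^ (2 * (j + 3 + 1)) =
        1 + ωc ^ (j + 1) + ωc ^ (2 * (j + 1)) := by
      linear_combination (ωc ^ (j + 1) + ωc ^ (2 * (j + 1)) * (ωc ^ 3 + 1)) * ωc_pow_three
    rw [airyCoeff, hperiod, div_mul_eq_mul_div, ih, zero_div]

lemma Ai_connection (x : ℂ) : Ai x + ωc * Ai (ωc * x) + ωc ^ 2 * Ai (ωc ^ 2 * x) = 0 := by
  refine (((hasSum_Ai x).add ((hasSum_Ai (ωc * x)).mul_left ωc)).add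
    ((hasSum_Ai (ωc ^ 2 * x)).mul_left (ωc ^ 2))).unique (hasSum_zero.congr_fun fun k => ?_)
  linear_combination x ^ k * airyCoeff_mul_one_add k

end Connection

section StarkDeterminant

open Complex (I)

/-- `z` is within `e^t - 1` of `1`. The budget `t` is additive under multiplication. -/
def IsNearOne (t : ℝ) (z : ℂ) : Prop := ‖z - 1‖ ≤ Real.exp t - 1

namespace IsNearOne

variable {s t : ℝ} {w z : ℂ}

lemma of_norm_sub_one_le (h : ‖z - 1‖ ≤ t) : IsNearOne t z := by
  have := Real.add_one_le_exp t
  rw [IsNearOne]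
  linarith

lemma norm_le (h : IsNearOne t z) : ‖z‖ ≤ Real.exp t := by
  have := norm_sub_norm_le z 1
  rw [norm_one] at this
  rw [IsNearOne] at h
  linarith

lemma mul (hw : IsNearOne s w) (hz : IsNearOne t z) : IsNearOne (s + t) (w * z) :=
  calc ‖w * z - 1‖ = ‖(w - 1) * z + (z - 1)‖ := by ring_nf
    _ ≤ ‖w - 1‖ * ‖z‖ + ‖z - 1‖ := (norm_add_le _ _).trans_eq (by rw [norm_mul])
    _ ≤ (Real.exp s - 1) * Real.exp t + (Real.exp t - 1) :=
      add_le_add (mul_le_mul hw hz.norm_le (norm_nonneg _) ((norm_nonneg _).trans hw)) hz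
    _ = Real.exp (s + t) - 1 := by rw [Real.exp_add]; ring

lemma mono (hz : IsNearOne s z) (h : s ≤ t) : IsNearOne t z :=
  hz.trans (sub_le_sub_right (Real.exp_le_exp.mpr h) 1)

lemma cexp (h : ‖z‖ ≤ t) : IsNearOne t (Complex.exp z) := by
  have := Complex.norm_exp_sub_sum_le_exp_norm_sub_sum z 1
  simp only [Finset.range_one, Finset.sum_singleton, pow_zero, Nat.factorial_zero, Nat.cast_one,
    div_one] at this
  exact this.trans (sub_le_sub_right (Real.exp_le_exp.mpr h) 1)

lemma inv (h : ‖z - 1‖ ≤ t) (ht : t ≤ 1 / 2) : IsNearOne (2 * t) z⁻¹ := by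
  have hz : 1 / 2 ≤ ‖z‖ := by
    have := norm_sub_norm_le 1 (1 - z)
    rw [norm_one, sub_sub_cancel, norm_sub_rev] at this
    linarith
  have hz0 : z ≠ 0 := norm_pos_iff.mp (by linarith)
  refine of_norm_sub_one_le ?_
  rw [inv_eq_one_div, div_sub_one hz0, norm_div, norm_sub_rev, div_le_iff₀ (by linarith)]
  nlinarith [norm_nonneg (z - 1)]

lemma norm_sub_one_le (hz : IsNearOne t z) (ht₀ : 0 ≤ t) (ht : t ≤ 1) : ‖z - 1‖ ≤ 2 * t := by
  have := (le_abs_self _).trans (Real.abs_exp_sub_one_le (abs_le.mpr ⟨by linarith, ht⟩))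
  rw [abs_of_nonneg ht₀] at this
  exact hz.trans this

end IsNearOne

/-- `X` and `R` are a dominant and a recessive solution of WKB form, with momentum `q`, action `S`
and error budget `t`. Only the products that occur in the determinant are recorded, so no square
root of `q` has to be chosen. -/
structure IsWKBPair (W q S : ℂ) (t : ℝ) (X R : ℂ) : Prop where
  sq_dominant : ∃ N, IsNearOne t N ∧ X ^ 2 / W = ζ₁₂ ^ 2 * Complex.exp S * N / (2 * q)
  mul : ∃ N, IsNearOne t N ∧ X * R / W = ζ₁₂ * N / (2 * q)
  sq_recessive : ∃ N, IsNearOne t N ∧ R ^ 2 / W = Complex.exp (-S) * N / (2 * q)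

/-- The dimensionless momentum `q f^{-1/3}`. -/
noncomputable def scaledMomentum (f : ℝ) (q : ℂ) : ℂ := ((f ^ (-(1 : ℝ) / 3) : ℝ) : ℂ) * q

/-- The solution `Ai (c² q² f^{-2/3})` of the Stark equation at energy `q²`; the directions
`c = ζ₁₂⁻¹, ζ₁₂³, ζ₁₂` give the Airy arguments `-ω q², -q², -ω² q²`. -/
noncomputable def airyBranch (f : ℝ) (c q : ℂ) : ℂ := Ai ((c * scaledMomentum f q) ^ 2)

/-- The action `4 i q³ / (3 f)` of the Stark Hamiltonian at momentum `q`. -/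
noncomputable def starkAction (f : ℝ) (q : ℂ) : ℂ := 4 * I * q ^ 3 / (3 * f)

/-- The action `starkAction` at the momenta `q'` with `q' ^ 2 = q ^ 2 ± κ f`, expanded in `f`
without the terms `± 2 i κ q` and `O(f²)`. -/
noncomputable def starkPhase (κ f : ℝ) (q : ℂ) : ℂ :=
  4 * I * q ^ 3 / (3 * f) + I * f * κ ^ 2 / (2 * q)

/-- Error budget of the WKB approximation at the momenta `q'` with `q' ^ 2 = q ^ 2 ± κ f`. -/
noncomputable def wkbError (κ f : ℝ) (q : ℂ) : ℝ :=
  (1800 + 4 * |κ| + 2 * |κ| ^ 3) * (f * (1 + ‖q‖) / ‖q‖ ^ 3)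

/-- The part of `Df` that contains the squares of the dominant solutions. -/
noncomputable def dominantDet (η : ℝ) (W X₁ R₁ X₂ R₂ : ℂ) : ℂ :=
  -ωc * (X₁ ^ 2 + X₂ ^ 2) / (η * W) -
    (X₁ ^ 2 * (X₂ * R₂) - X₂ ^ 2 * (X₁ * R₁)) / (η ^ 2 * W ^ 2)

variable {f η κ t : ℝ} {W q u S₁ S₂ q₁ q₂ X₁ X₂ R₁ R₂ : ℂ}

lemma scaledMomentum_pow_three (hf : 0 < f) (q : ℂ) : scaledMomentum f q ^ 3 = q ^ 3 / f := by
  have h : (f ^ (-(1 : ℝ) / 3)) ^ 3 = f⁻¹ := by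
    rw [← Real.rpow_natCast, ← Real.rpow_mul hf.le]
    norm_num [Real.rpow_neg_one]
  rw [scaledMomentum, mul_pow, ← Complex.ofReal_pow, h]
  push_cast
  ring

lemma norm_scaledMomentum_pow_three (hf : 0 < f) (q : ℂ) :
    ‖scaledMomentum f q‖ ^ 3 = ‖q‖ ^ 3 / f := by
  rw [← norm_pow, scaledMomentum_pow_three hf, norm_div, norm_pow, Complex.norm_real,
    Real.norm_of_nonneg hf.le]

lemma scaledMomentum_sq (hf : 0 < f) (q : ℂ) :
    scaledMomentum f q ^ 2 = q ^ 2 * ((f ^ (-(2 : ℝ) / 3) : ℝ) : ℂ) := by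
  have h : (f ^ (-(1 : ℝ) / 3)) ^ 2 = f ^ (-(2 : ℝ) / 3) := by
    rw [← Real.rpow_natCast, ← Real.rpow_mul hf.le]
    norm_num
  rw [scaledMomentum, mul_pow, ← Complex.ofReal_pow, h]
  ring

lemma re_mul_scaledMomentum_pos (hf : 0 < f) {c : ℂ} (h : 0 < (c * q).re) :
    0 < (c * scaledMomentum f q).re := by
  rw [scaledMomentum, mul_left_comm, Complex.re_ofReal_mul]
  positivity

lemma Wf_mul_scaledMomentum (hf : 0 < f) (q : ℂ) :
    Wf f * scaledMomentum f q = ζ₁₂⁻¹ * q / (2 * π) := by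
  have h : f ^ ((1 : ℝ) / 3) * f ^ (-(1 : ℝ) / 3) = 1 := by
    rw [← Real.rpow_add hf]
    norm_num
  have hζ : ζ₁₂⁻¹ = Complex.exp (-(π : ℂ) * I / 6) := by
    rw [ζ₁₂, ← Complex.exp_neg]
    ring_nf
  have hc : ((f ^ ((1 : ℝ) / 3) : ℝ) : ℂ) * ((f ^ (-(1 : ℝ) / 3) : ℝ) : ℂ) = 1 := by
    exact_mod_cast h
  rw [Wf, scaledMomentum, hζ]
  linear_combination Complex.exp (-(π : ℂ) * I / 6) * q / (2 * π) * hc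

lemma mul_airyBranch_mul_airyBranch (hf : 0 < f) {c d k : ℂ} (hk : k ^ 2 = c * d)
    (hcq : 0 < (c * q).re) (hdq : 0 < (d * q).re) (hkq : 0 < (k * q).re) :
    k * (airyBranch f c q * airyBranch f d q) / Wf f =
      ζ₁₂ * Complex.exp (-(2 / 3 * ((c ^ 3 + d ^ 3) * (q ^ 3 / f)))) *
        (airyCorr (c * scaledMomentum f q) * airyCorr (d * scaledMomentum f q)) / (2 * q) := by
  have hcv := re_mul_scaledMomentum_pos hf hcq
  have hdv := re_mul_scaledMomentum_pos hf hdq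
  have hkv := re_mul_scaledMomentum_pos hf hkq
  have hWv := Wf_mul_scaledMomentum hf q
  rw [← scaledMomentum_pow_three hf, airyBranch, airyBranch]
  set v := scaledMomentum f q
  have hne {x : ℂ} (hx : 0 < x.re) : x ≠ 0 := by rintro rfl; simp at hx
  have hprod := airyWKB_mul_airyWKB hcv hdv hkv (by linear_combination v ^ 2 * hk)
  have hq0 : q ≠ 0 := right_ne_zero_of_mul (hne hcq)
  have hk0 : k ≠ 0 := left_ne_zero_of_mul (hne hkq)
  have hv0 : v ≠ 0 := right_ne_zero_of_mul (hne hcv)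
  have hpi : (π : ℂ) ≠ 0 := by exact_mod_cast Real.pi_ne_zero
  have hW : Wf f = ζ₁₂⁻¹ * q / (2 * π * v) := by
    rw [← div_div, ← hWv]; field_simp
  rw [Ai_sq_eq_airyWKB_mul_airyCorr (hne hcv), Ai_sq_eq_airyWKB_mul_airyCorr (hne hdv),
    mul_mul_mul_comm, hprod, hW, mul_pow, mul_pow, ← add_mul]
  field_simp [ζ₁₂_ne_zero]
  ring

lemma norm_eq_one_of_pow_eq {c d : ℂ} {n : ℕ} (hn : n ≠ 0) (h : c ^ n = d) (hd : ‖d‖ = 1) :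
    ‖c‖ = 1 := by
  rwa [← h, norm_pow, pow_eq_one_iff_of_nonneg (norm_nonneg c) hn] at hd

lemma exists_sq_eq_one_add (τ : ℂ) : ∃ u : ℂ, u ^ 2 = 1 + τ ∧ ‖u - 1‖ ≤ ‖τ‖ := by
  have hle {v : ℂ} (hv : v ^ 2 = 1 + τ) (hre : 0 ≤ v.re) : ‖v - 1‖ ≤ ‖τ‖ := by
    have h1 : 1 ≤ ‖v + 1‖ := by
      refine le_trans ?_ (Complex.re_le_norm _)
      simpa using hre
    calc ‖v - 1‖ ≤ ‖v - 1‖ * ‖v + 1‖ := le_mul_of_one_le_right (norm_nonneg _) h1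
      _ = ‖τ‖ := by rw [← norm_mul]; congr 1; linear_combination hv
  obtain ⟨v, hv⟩ := IsAlgClosed.exists_pow_nat_eq (1 + τ) two_pos
  rcases le_total 0 v.re with h | h
  · exact ⟨v, hv, hle hv h⟩
  · have hv' : (-v) ^ 2 = 1 + τ := by rw [neg_sq, hv]
    exact ⟨-v, hv', hle hv' (by simpa using h)⟩

lemma norm_pow_three_sub_taylor_le {τ : ℂ} (hu : u ^ 2 = 1 + τ) (h : ‖u - 1‖ ≤ ‖τ‖)
    (hτ : ‖τ‖ ≤ 1) : ‖u ^ 3 - (1 + 3 / 2 * τ + 3 / 8 * τ ^ 2)‖ ≤ ‖τ‖ ^ 3 := by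
  obtain rfl : τ = u ^ 2 - 1 := by linear_combination -hu
  have h3 : ‖u - 1‖ ^ 3 ≤ ‖u ^ 2 - 1‖ ^ 3 := by gcongr
  calc ‖u ^ 3 - (1 + 3 / 2 * (u ^ 2 - 1) + 3 / 8 * (u ^ 2 - 1) ^ 2)‖
      = ‖(u - 1) ^ 3 * (1 / 2 + 3 / 8 * (u - 1))‖ := by rw [← norm_neg]; ring_nf
    _ ≤ ‖u - 1‖ ^ 3 * (1 / 2 + 3 / 8 * ‖u - 1‖) := by
      rw [norm_mul, norm_pow]
      gcongr
      exact (norm_add_le _ _).trans_eq (by simp)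
    _ ≤ ‖u - 1‖ ^ 3 * 1 := by gcongr; linarith
    _ ≤ ‖u ^ 2 - 1‖ ^ 3 := by rwa [mul_one]

lemma norm_starkAction_mul_sub_le (hf : 0 < f) (hq : q ≠ 0) (hu : u ^ 2 = 1 + κ * f / q ^ 2)
    (h : ‖u - 1‖ ≤ ‖κ * f / q ^ 2‖) (hτ : ‖κ * f / q ^ 2‖ ≤ 1) :
    ‖starkAction f (q * u) - (starkPhase κ f q + 2 * I * κ * q)‖ ≤
      2 * (|κ| ^ 3 * f ^ 2 / ‖q‖ ^ 3) := by
  have hf0 : (f : ℂ) ≠ 0 := by exact_mod_cast hf.ne'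
  have : 0 < ‖q‖ := norm_pos_iff.mpr hq
  have hsplit : starkAction f (q * u) - (starkPhase κ f q + 2 * I * κ * q) = 4 * I * q ^ 3 /
      (3 * f) * (u ^ 3 - (1 + 3 / 2 * (κ * f / q ^ 2) + 3 / 8 * (κ * f / q ^ 2) ^ 2)) := by
    rw [starkAction, starkPhase]
    field_simp
    ring
  calc ‖starkAction f (q * u) - (starkPhase κ f q + 2 * I * κ * q)‖
      ≤ 4 * ‖q‖ ^ 3 / (3 * f) * ‖κ * f / q ^ 2‖ ^ 3 := by
        rw [hsplit, norm_mul]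
        gcongr
        · simp [abs_of_pos hf]
        · exact norm_pow_three_sub_taylor_le hu h hτ
    _ = 4 / 3 * (|κ| ^ 3 * f ^ 2 / ‖q‖ ^ 3) := by
        simp only [norm_div, norm_mul, norm_pow, Complex.norm_real, Real.norm_eq_abs,
          abs_of_pos hf]
        field_simp
    _ ≤ 2 * (|κ| ^ 3 * f ^ 2 / ‖q‖ ^ 3) := by
        gcongr
        norm_num

lemma quarter_norm_le_re_of_norm_sub_one_le {c : ℂ} (hc : ‖c‖ = 1) (hcq : ‖q‖ / 2 ≤ (c * q).re)
    (hu : ‖u - 1‖ ≤ 1 / 8) : ‖q * u‖ / 4 ≤ (c * (q * u)).re := by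
  have hd : |(c * (q * (u - 1))).re| ≤ ‖q‖ / 8 := by
    refine (Complex.abs_re_le_norm _).trans ?_
    rw [norm_mul, norm_mul, hc]
    nlinarith [norm_nonneg q]
  have hsplit : (c * (q * u)).re = (c * q).re + (c * (q * (u - 1))).re := by
    rw [← Complex.add_re]; ring_nf
  have hn : ‖q * u‖ ≤ 9 / 8 * ‖q‖ := by
    have := norm_add_le (u - 1) 1
    rw [sub_add_cancel, norm_one] at this
    rw [norm_mul]
    nlinarith [norm_nonneg q]
  linarith [(abs_le.mp hd).1, norm_nonneg q]

lemma isNearOne_airyCorr (hf : 0 < f) (hq : q ≠ 0) {c : ℂ} (hc : ‖c‖ = 1)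
    (hcq : ‖q‖ / 2 ≤ (c * q).re) (hu : ‖u - 1‖ ≤ 1 / 8) :
    IsNearOne (900 * f / ‖q‖ ^ 3) (airyCorr (c * scaledMomentum f (q * u))) := by
  have hq' : 0 < ‖q‖ := norm_pos_iff.mpr hq
  have hqu : 7 / 8 * ‖q‖ ≤ ‖q * u‖ := by
    have := norm_sub_norm_le 1 (1 - u)
    rw [sub_sub_cancel, norm_one, norm_sub_rev] at this
    rw [norm_mul]
    nlinarith
  have hcone : ‖c * scaledMomentum f (q * u)‖ / 4 ≤ (c * scaledMomentum f (q * u)).re := by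
    have := quarter_norm_le_re_of_norm_sub_one_le hc hcq hu
    have hf' : 0 ≤ f ^ (-(1 : ℝ) / 3) := by positivity
    rw [scaledMomentum, mul_left_comm, Complex.re_ofReal_mul, norm_mul, Complex.norm_real,
      Real.norm_of_nonneg hf', norm_mul, hc, one_mul, mul_div_assoc]
    gcongr
  have hn : ‖c * scaledMomentum f (q * u)‖ ^ 3 = ‖q * u‖ ^ 3 / f := by
    rw [norm_mul, hc, one_mul, norm_scaledMomentum_pow_three hf]
  have hs0 : c * scaledMomentum f (q * u) ≠ 0 := by
    refine norm_pos_iff.mp (pos_of_mul_pos_left (b := ‖c * scaledMomentum f (q * u)‖ ^ 2) ?_ ?_)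
    · rw [← pow_succ', hn]
      have : 0 < ‖q * u‖ := by linarith
      positivity
    · positivity
  refine .of_norm_sub_one_le ((norm_airyCorr_sub_one_le_of_cone hs0 hcone).trans ?_)
  calc 600 / ‖c * scaledMomentum f (q * u)‖ ^ 3
      ≤ 600 / ((7 / 8 * ‖q‖) ^ 3 / f) := by rw [hn]; gcongr
    _ ≤ 900 * f / ‖q‖ ^ 3 := by
      rw [div_div_eq_mul_div, mul_pow, div_le_div_iff₀ (by positivity) (by positivity)]
      nlinarith [mul_pos hf (pow_pos hq' 3)]

lemma wkbError_nonneg (hf : 0 < f) (κ : ℝ) (q : ℂ) : 0 ≤ wkbError κ f q := by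
  rw [wkbError]; positivity

lemma norm_mul_div_sq_le_wkbError (hf : 0 < f) (κ : ℝ) (hq : q ≠ 0) :
    ‖κ * f / q ^ 2‖ ≤ wkbError κ f q / 4 := by
  have : 0 < ‖q‖ := norm_pos_iff.mpr hq
  calc ‖κ * f / q ^ 2‖ = |κ| * (f * ‖q‖ / ‖q‖ ^ 3) := by
        simp only [norm_div, norm_mul, norm_pow, Complex.norm_real, Real.norm_eq_abs,
          abs_of_pos hf]
        field_simp
    _ ≤ (450 + |κ| + |κ| ^ 3 / 2) * (f * (1 + ‖q‖) / ‖q‖ ^ 3) := by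
        gcongr
        · linarith [show 0 ≤ |κ| ^ 3 by positivity]
        · linarith
    _ = wkbError κ f q / 4 := by rw [wkbError]; ring

lemma budget_le_wkbError (hf : 0 < f) (hf1 : f ≤ 1) (κ : ℝ) (hq : q ≠ 0) :
    2 * (|κ| ^ 3 * f ^ 2 / ‖q‖ ^ 3) + (900 * f / ‖q‖ ^ 3 + 900 * f / ‖q‖ ^ 3) +
      2 * ‖κ * f / q ^ 2‖ ≤ wkbError κ f q := by
  have hq' : 0 < ‖q‖ := norm_pos_iff.mpr hq
  have h1 : f / ‖q‖ ^ 3 ≤ f * (1 + ‖q‖) / ‖q‖ ^ 3 := by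
    gcongr
    nlinarith
  have h2 : ‖κ * f / q ^ 2‖ ≤ |κ| * (f * (1 + ‖q‖) / ‖q‖ ^ 3) := by
    simp only [norm_div, norm_mul, norm_pow, Complex.norm_real, Real.norm_eq_abs, abs_of_pos hf]
    rw [mul_div_assoc]
    refine mul_le_mul_of_nonneg_left ?_ (abs_nonneg κ)
    rw [div_le_div_iff₀ (by positivity) (by positivity)]
    nlinarith [mul_pos hf (pow_pos hq' 2)]
  have h3 : |κ| ^ 3 * f ^ 2 / ‖q‖ ^ 3 ≤ |κ| ^ 3 * (f * (1 + ‖q‖) / ‖q‖ ^ 3) := by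
    rw [mul_div_assoc]
    gcongr
    nlinarith
  have h4 : 0 ≤ |κ| * (f * (1 + ‖q‖) / ‖q‖ ^ 3) := by positivity
  rw [wkbError]
  linarith [mul_div_assoc 900 f (‖q‖ ^ 3)]

lemma isWKBPair_of_products {X R g h S' : ℂ} {a b : ℝ}
    (hX : X ^ 2 / W = ζ₁₂ ^ 2 * Complex.exp S' * (g * g) / (2 * (q * u)))
    (hm : X * R / W = ζ₁₂ * (g * h) / (2 * (q * u)))
    (hR : R ^ 2 / W = Complex.exp (-S') * (h * h) / (2 * (q * u)))
    (hS : ‖S' - S₁‖ ≤ a) (hg : IsNearOne b g) (hh : IsNearOne b h)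
    (hu : ‖u - 1‖ ≤ 1 / 2) (ht : a + (b + b) + 2 * ‖u - 1‖ ≤ t) : IsWKBPair W q S₁ t X R := by
  have hinv := IsNearOne.inv le_rfl hu
  refine ⟨⟨_, (((IsNearOne.cexp hS).mul (hg.mul hg)).mul hinv).mono ht, ?_⟩,
    ⟨_, ((hg.mul hh).mul hinv).mono (by linarith [(norm_nonneg _).trans hS]), ?_⟩,
    ⟨_, (((IsNearOne.cexp (z := -(S' - S₁)) (by rwa [norm_neg])).mul (hh.mul hh)).mul hinv).mono ht,
      ?_⟩⟩
  · rw [hX, show S' = S₁ + (S' - S₁) by ring, Complex.exp_add, add_sub_cancel_left]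
    ring
  · rw [hm]
    ring
  · rw [hR, show -S' = -S₁ + -(S' - S₁) by ring, Complex.exp_add]
    ring

lemma airyBranch_products (hf : 0 < f) {c k : ℂ} (hc : c ^ 3 = -I) (hk : k ^ 2 = ζ₁₂ * c)
    (hcq : 0 < (c * q).re) (hζq : 0 < (ζ₁₂ * q).re) (hkq : 0 < (k * q).re) {X g h : ℂ}
    (hX : X = k * airyBranch f c q) (hg : g = airyCorr (c * scaledMomentum f q))
    (hh : h = airyCorr (ζ₁₂ * scaledMomentum f q)) :
    X ^ 2 / Wf f = ζ₁₂ ^ 2 * Complex.exp (starkAction f q) * (g * g) / (2 * q) ∧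
      X * airyBranch f ζ₁₂ q / Wf f = ζ₁₂ * (g * h) / (2 * q) ∧
      airyBranch f ζ₁₂ q ^ 2 / Wf f = Complex.exp (-starkAction f q) * (h * h) / (2 * q) := by
  have hcc := mul_airyBranch_mul_airyBranch hf (sq c) hcq hcq hcq
  have hcζ := mul_airyBranch_mul_airyBranch hf (hk.trans (mul_comm _ _)) hcq hζq hkq
  have hζζ := mul_airyBranch_mul_airyBranch hf (sq ζ₁₂) hζq hζq hζq
  rw [hc, ← hg, show -(2 / 3 * ((-I + -I) * (q ^ 3 / f))) = starkAction f q by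
    rw [starkAction]; ring] at hcc
  rw [hc, ζ₁₂_pow_three, ← hg, ← hh, show -(2 / 3 * ((-I + I) * (q ^ 3 / f))) = 0 by ring,
    Complex.exp_zero] at hcζ
  rw [ζ₁₂_pow_three, ← hh, show -(2 / 3 * ((I + I) * (q ^ 3 / f))) = -starkAction f q by
    rw [starkAction]; ring] at hζζ
  subst hX
  refine ⟨?_, ?_, mul_left_cancel₀ ζ₁₂_ne_zero ?_⟩
  · linear_combination airyBranch f c q ^ 2 / Wf f * hk + ζ₁₂ * hcc
  · linear_combination hcζ
  · linear_combination hζζ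

lemma isWKBPair_airyBranch_mul (hf : 0 < f) (hf1 : f ≤ 1) (hq : q ≠ 0)
    (hE : wkbError κ f q ≤ 1 / 2) (hu : u ^ 2 = 1 + κ * f / q ^ 2)
    (hu1 : ‖u - 1‖ ≤ ‖κ * f / q ^ 2‖) {c k : ℂ} (hc : c ^ 3 = -I) (hk : k ^ 2 = ζ₁₂ * c)
    (hcq : ‖q‖ / 2 ≤ (c * q).re) (hζq : ‖q‖ / 2 ≤ (ζ₁₂ * q).re) (hkq : ‖q‖ / 2 ≤ (k * q).re) :
    IsWKBPair (Wf f) q (starkPhase κ f q + 2 * I * κ * q) (wkbError κ f q)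
      (k * airyBranch f c (q * u)) (airyBranch f ζ₁₂ (q * u)) := by
  have hτ : ‖κ * f / q ^ 2‖ ≤ 1 / 8 := by linarith [norm_mul_div_sq_le_wkbError hf κ hq]
  have hu8 := hu1.trans hτ
  have hcn : ‖c‖ = 1 := norm_eq_one_of_pow_eq three_ne_zero hc (by simp)
  have hkn : ‖k‖ = 1 :=
    norm_eq_one_of_pow_eq two_ne_zero hk (by rw [norm_mul, hcn, norm_ζ₁₂, one_mul])
  have hu0 : u ≠ 0 := by
    rintro rfl
    norm_num at hu8
  have hpos {d : ℂ} (hd : ‖d‖ = 1) (hdq : ‖q‖ / 2 ≤ (d * q).re) : 0 < (d * (q * u)).re := by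
    have := norm_pos_iff.mpr (mul_ne_zero hq hu0)
    linarith [quarter_norm_le_re_of_norm_sub_one_le hd hdq hu8]
  obtain ⟨hX, hm, hR⟩ := airyBranch_products hf hc hk (hpos hcn hcq) (hpos norm_ζ₁₂ hζq)
    (hpos hkn hkq) rfl rfl rfl
  refine isWKBPair_of_products hX hm hR (norm_starkAction_mul_sub_le hf hq hu hu1 (by linarith))
    (isNearOne_airyCorr hf hq hcn hcq hu8) (isNearOne_airyCorr hf hq norm_ζ₁₂ hζq hu8)
    (by linarith) ?_
  linarith [budget_le_wkbError hf hf1 κ hq]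

lemma exists_isWKBPair_airyBranch (hf : 0 < f) (hf1 : f ≤ 1) (hq : q ≠ 0)
    (hE : wkbError κ f q ≤ 1 / 2) : ∃ q' : ℂ, q' ^ 2 = q ^ 2 + κ * f ∧
      ∀ c k : ℂ, c ^ 3 = -I → k ^ 2 = ζ₁₂ * c → ‖q‖ / 2 ≤ (c * q).re → ‖q‖ / 2 ≤ (ζ₁₂ * q).re →
        ‖q‖ / 2 ≤ (k * q).re →
        IsWKBPair (Wf f) q (starkPhase κ f q + 2 * I * κ * q) (wkbError κ f q)
          (k * airyBranch f c q') (airyBranch f ζ₁₂ q') := by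
  obtain ⟨u, hu, hu1⟩ := exists_sq_eq_one_add (κ * f / q ^ 2)
  refine ⟨q * u, ?_, fun c k hc hk => isWKBPair_airyBranch_mul hf hf1 hq hE hu hu1 hc hk⟩
  rw [mul_pow, hu]
  field_simp

lemma airyBranch_connection (f : ℝ) (q : ℂ) :
    airyBranch f (ζ₁₂ ^ 3) q + ωc * airyBranch f ζ₁₂⁻¹ q + ωc ^ 2 * airyBranch f ζ₁₂ q = 0 := by
  have h := Ai_connection ((ζ₁₂ ^ 3 * scaledMomentum f q) ^ 2)
  have h1 : ωc * (ζ₁₂ ^ 3 * scaledMomentum f q) ^ 2 = (ζ₁₂⁻¹ * scaledMomentum f q) ^ 2 := by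
    rw [ωc_eq_ζ₁₂_pow_four]
    field_simp [ζ₁₂_ne_zero]
    linear_combination scaledMomentum f q ^ 2 * (ζ₁₂ ^ 6 - 1) * ζ₁₂_pow_six
  have h2 : ωc ^ 2 * (ζ₁₂ ^ 3 * scaledMomentum f q) ^ 2 = (ζ₁₂ * scaledMomentum f q) ^ 2 := by
    rw [ωc_eq_ζ₁₂_pow_four]
    linear_combination scaledMomentum f q ^ 2 * ζ₁₂ ^ 2 * (ζ₁₂ ^ 6 - 1) * ζ₁₂_pow_six
  rwa [h1, h2] at h

lemma Df_eq_airyBranch (hf : 0 < f) {z : ℂ} (h₁ : q₁ ^ 2 = z + κ * f) (h₂ : q₂ ^ 2 = z - κ * f) :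
    Df κ η f z = 1 + (airyBranch f ζ₁₂⁻¹ q₂ * airyBranch f (ζ₁₂ ^ 3) q₂ +
        airyBranch f ζ₁₂⁻¹ q₁ * airyBranch f (ζ₁₂ ^ 3) q₁) / (η * Wf f) +
      airyBranch f ζ₁₂⁻¹ q₁ * airyBranch f (ζ₁₂ ^ 3) q₂ *
        (airyBranch f ζ₁₂⁻¹ q₂ * airyBranch f (ζ₁₂ ^ 3) q₁ -
          airyBranch f ζ₁₂⁻¹ q₁ * airyBranch f (ζ₁₂ ^ 3) q₂) / (η ^ 2 * Wf f ^ 2) := by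
  have hω : -ωc = ζ₁₂⁻¹ ^ 2 := by
    rw [ωc_eq_ζ₁₂_pow_four]
    field_simp [ζ₁₂_ne_zero]
    linear_combination -ζ₁₂_pow_six
  have hU (q : ℂ) : airyBranch f ζ₁₂⁻¹ q = Ai (-ωc * q ^ 2 * ((f ^ (-(2 : ℝ) / 3) : ℝ) : ℂ)) := by
    rw [airyBranch, mul_pow, scaledMomentum_sq hf, hω, mul_assoc]
  have hV (q : ℂ) : airyBranch f (ζ₁₂ ^ 3) q = Ai (-q ^ 2 * ((f ^ (-(2 : ℝ) / 3) : ℝ) : ℂ)) := by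
    rw [airyBranch, mul_pow, scaledMomentum_sq hf, ← pow_mul, ζ₁₂_pow_six]
    ring_nf
  rw [hU, hU, hV, hV, h₁, h₂]
  rfl

lemma Df_sub_dominantDet_eq_of_branch_inv (hf : 0 < f) {z : ℂ} (h₁ : q₁ ^ 2 = z + κ * f)
    (h₂ : q₂ ^ 2 = z - κ * f) (hX₁ : X₁ = airyBranch f ζ₁₂⁻¹ q₁) (hX₂ : X₂ = airyBranch f ζ₁₂⁻¹ q₂)
    (hR₁ : R₁ = airyBranch f ζ₁₂ q₁) (hR₂ : R₂ = airyBranch f ζ₁₂ q₂) :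
    Df κ η f z - dominantDet η (Wf f) X₁ R₁ X₂ R₂ =
      1 + -ωc ^ 2 * (X₁ * R₁ / Wf f + X₂ * R₂ / Wf f) / η -
        ωc * ((X₁ * R₂ / Wf f) ^ 2 - X₁ * R₁ / Wf f * (X₂ * R₂ / Wf f)) / η ^ 2 := by
  have hV₁ : airyBranch f (ζ₁₂ ^ 3) q₁ = -ωc * X₁ - ωc ^ 2 * R₁ := by
    rw [hX₁, hR₁]; linear_combination airyBranch_connection f q₁
  have hV₂ : airyBranch f (ζ₁₂ ^ 3) q₂ = -ωc * X₂ - ωc ^ 2 * R₂ := by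
    rw [hX₂, hR₂]; linear_combination airyBranch_connection f q₂
  rw [Df_eq_airyBranch hf h₁ h₂, ← hX₁, ← hX₂, hV₁, hV₂, dominantDet]
  generalize Wf f = W
  linear_combination (-(X₁ * X₂ + ωc * X₁ * R₂) * (X₁ * R₂ - X₂ * R₁) / (η ^ 2 * W ^ 2)) *
    ωc_pow_three

lemma Df_sub_dominantDet_eq_of_branch_cube (hf : 0 < f) {z : ℂ} (h₁ : q₁ ^ 2 = z + κ * f)
    (h₂ : q₂ ^ 2 = z - κ * f) (hX₁ : X₁ = -ωc ^ 2 * airyBranch f (ζ₁₂ ^ 3) q₁)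
    (hX₂ : X₂ = -ωc ^ 2 * airyBranch f (ζ₁₂ ^ 3) q₂)
    (hR₁ : R₁ = airyBranch f ζ₁₂ q₁) (hR₂ : R₂ = airyBranch f ζ₁₂ q₂) :
    Df κ η f z - dominantDet η (Wf f) X₁ R₁ X₂ R₂ =
      1 + ωc ^ 2 * (X₁ * R₁ / Wf f + X₂ * R₂ / Wf f) / η -
        ωc * ((X₂ * R₁ / Wf f) ^ 2 - X₁ * R₁ / Wf f * (X₂ * R₂ / Wf f)) / η ^ 2 := by
  have hV₁ : airyBranch f (ζ₁₂ ^ 3) q₁ = -ωc * X₁ := by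
    rw [hX₁]; linear_combination -airyBranch f (ζ₁₂ ^ 3) q₁ * ωc_pow_three
  have hV₂ : airyBranch f (ζ₁₂ ^ 3) q₂ = -ωc * X₂ := by
    rw [hX₂]; linear_combination -airyBranch f (ζ₁₂ ^ 3) q₂ * ωc_pow_three
  have hU₁ : airyBranch f ζ₁₂⁻¹ q₁ = X₁ - ωc * R₁ := by
    rw [hX₁, hR₁]
    linear_combination ωc ^ 2 * airyBranch_connection f q₁ -
      (airyBranch f ζ₁₂⁻¹ q₁ + ωc * airyBranch f ζ₁₂ q₁) * ωc_pow_three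
  have hU₂ : airyBranch f ζ₁₂⁻¹ q₂ = X₂ - ωc * R₂ := by
    rw [hX₂, hR₂]
    linear_combination ωc ^ 2 * airyBranch_connection f q₂ -
      (airyBranch f ζ₁₂⁻¹ q₂ + ωc * airyBranch f ζ₁₂ q₂) * ωc_pow_three
  rw [Df_eq_airyBranch hf h₁ h₂, hU₁, hU₂, hV₁, hV₂, dominantDet]
  generalize Wf f = W
  linear_combination ((ωc * R₁ - X₁) * X₂ * (X₁ * R₂ - X₂ * R₁) / (η ^ 2 * W ^ 2)) * ωc_pow_three

lemma norm_dominantDet_sub_le (hη : 0 < η) (hq : q ≠ 0) (ht₀ : 0 ≤ t) (ht : t ≤ 1 / 2)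
    (h₁ : IsWKBPair W q S₁ t X₁ R₁) (h₂ : IsWKBPair W q S₂ t X₂ R₂) :
    ‖dominantDet η W X₁ R₁ X₂ R₂ -
      (Complex.exp S₁ * (1 / (2 * η * q) - I / (4 * η ^ 2 * q ^ 2)) +
        Complex.exp S₂ * (1 / (2 * η * q) + I / (4 * η ^ 2 * q ^ 2)))‖ ≤
      4 * t * (1 / (2 * η * ‖q‖) + 1 / (4 * η ^ 2 * ‖q‖ ^ 2)) *
        (‖Complex.exp S₁‖ + ‖Complex.exp S₂‖) := by
  obtain ⟨N₁, hN₁, hX₁⟩ := h₁.sq_dominant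
  obtain ⟨N₂, hN₂, hX₂⟩ := h₂.sq_dominant
  obtain ⟨P₁, hP₁, hm₁⟩ := h₁.mul
  obtain ⟨P₂, hP₂, hm₂⟩ := h₂.mul
  have hamp {N P σ : ℂ} (hN : IsNearOne t N) (hP : IsNearOne t P) (hσ : ‖σ‖ = 1) :
      ‖(N - 1) / (2 * η * q) + σ * ((N * P - 1) / (4 * η ^ 2 * q ^ 2))‖ ≤
        4 * t * (1 / (2 * η * ‖q‖) + 1 / (4 * η ^ 2 * ‖q‖ ^ 2)) := by
    have hN' : ‖N - 1‖ ≤ 4 * t := (hN.norm_sub_one_le ht₀ (by linarith)).trans (by linarith)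
    have hNP : ‖N * P - 1‖ ≤ 4 * t :=
      ((hN.mul hP).norm_sub_one_le (by linarith) (by linarith)).trans (by linarith)
    have h1 : ‖2 * η * q‖ = 2 * η * ‖q‖ := by simp [abs_of_pos hη]
    have h2 : ‖4 * η ^ 2 * q ^ 2‖ = 4 * η ^ 2 * ‖q‖ ^ 2 := by simp
    refine (norm_add_le _ _).trans ?_
    rw [norm_mul, hσ, one_mul, norm_div, norm_div, h1, h2, mul_add, mul_one_div, mul_one_div]
    gcongr
  have hsplit : dominantDet η W X₁ R₁ X₂ R₂ -
      (Complex.exp S₁ * (1 / (2 * η * q) - I / (4 * η ^ 2 * q ^ 2)) +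
        Complex.exp S₂ * (1 / (2 * η * q) + I / (4 * η ^ 2 * q ^ 2))) =
      Complex.exp S₁ * ((N₁ - 1) / (2 * η * q) + -I * ((N₁ * P₂ - 1) / (4 * η ^ 2 * q ^ 2))) +
      Complex.exp S₂ * ((N₂ - 1) / (2 * η * q) + I * ((N₂ * P₁ - 1) / (4 * η ^ 2 * q ^ 2))) := by
    have hζ : ζ₁₂ ^ 3 = I := ζ₁₂_pow_three
    rw [show dominantDet η W X₁ R₁ X₂ R₂ = -ωc * (X₁ ^ 2 / W + X₂ ^ 2 / W) / η -
      (X₁ ^ 2 / W * (X₂ * R₂ / W) - X₂ ^ 2 / W * (X₁ * R₁ / W)) / η ^ 2 by rw [dominantDet]; ring,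
      hX₁, hX₂, hm₁, hm₂, ωc_eq_ζ₁₂_pow_four]
    linear_combination (-(Complex.exp S₁ * N₁ / (2 * q) + Complex.exp S₂ * N₂ / (2 * q)) / η) *
      ζ₁₂_pow_six - (Complex.exp S₁ * N₁ * P₂ - Complex.exp S₂ * N₂ * P₁) / (4 * q ^ 2 * η ^ 2) * hζ
  rw [hsplit, mul_add (4 * t * _), mul_comm _ ‖Complex.exp S₁‖, mul_comm _ ‖Complex.exp S₂‖]
  refine (norm_add_le _ _).trans (add_le_add ?_ ?_) <;> rw [norm_mul] <;> gcongr
  · exact hamp hN₁ hP₂ (by simp)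
  · exact hamp hN₂ hP₁ (by simp)

lemma IsWKBPair.norm_mul_le (h : IsWKBPair W q S₁ t X₁ R₁) (ht₀ : 0 ≤ t) (ht : t ≤ 1 / 2) :
    ‖X₁ * R₁ / W‖ ≤ 1 / ‖q‖ := by
  obtain ⟨N, hN, hm⟩ := h.mul
  have hN2 : ‖N‖ ≤ 2 := by
    have := norm_add_le (N - 1) 1
    rw [sub_add_cancel, norm_one] at this
    linarith [hN.norm_sub_one_le ht₀ (by linarith)]
  calc ‖X₁ * R₁ / W‖ = ‖N‖ / (2 * ‖q‖) := by rw [hm]; simp [norm_ζ₁₂]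
    _ ≤ 2 / (2 * ‖q‖) := by gcongr
    _ = 1 / ‖q‖ := by rw [← div_div, div_self two_ne_zero]

lemma IsWKBPair.norm_cross_sq_le (h₁ : IsWKBPair W q S₁ t X₁ R₁) (h₂ : IsWKBPair W q S₂ t X₂ R₂)
    (ht₀ : 0 ≤ t) (ht : t ≤ 1 / 2) :
    ‖X₁ * R₂ / W‖ ^ 2 ≤ ‖Complex.exp (S₁ - S₂)‖ / ‖q‖ ^ 2 := by
  obtain ⟨N, hN, hX⟩ := h₁.sq_dominant
  obtain ⟨P, hP, hR⟩ := h₂.sq_recessive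
  have hNP : ‖N * P‖ ≤ 4 := by
    have := norm_add_le (N * P - 1) 1
    rw [sub_add_cancel, norm_one] at this
    linarith [(hN.mul hP).norm_sub_one_le (by linarith) (by linarith)]
  have hsq : (X₁ * R₂ / W) ^ 2 = Complex.exp (S₁ - S₂) * (ζ₁₂ ^ 2 * (N * P) / (4 * q ^ 2)) := by
    rw [show (X₁ * R₂ / W) ^ 2 = X₁ ^ 2 / W * (R₂ ^ 2 / W) by ring, hX, hR, sub_eq_add_neg,
      Complex.exp_add]
    ring
  calc ‖X₁ * R₂ / W‖ ^ 2 = ‖Complex.exp (S₁ - S₂)‖ * (‖N * P‖ / (4 * ‖q‖ ^ 2)) := by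
        rw [← norm_pow, hsq]; simp [norm_ζ₁₂]
    _ ≤ ‖Complex.exp (S₁ - S₂)‖ * (4 / (4 * ‖q‖ ^ 2)) := by gcongr
    _ = ‖Complex.exp (S₁ - S₂)‖ / ‖q‖ ^ 2 := by
        rw [← div_div, div_self four_ne_zero, mul_one_div]

lemma norm_remainder_le {B p : ℝ} (hη : 0 < η) (hp : 0 < p) (hB : 1 ≤ B) {ρ m₁ m₂ x : ℂ}
    (hρ : ‖ρ‖ = 1) (hm₁ : ‖m₁‖ ≤ 1 / p) (hm₂ : ‖m₂‖ ≤ 1 / p) (hx : ‖x‖ ^ 2 ≤ B / p ^ 2) :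
    ‖1 + ρ * (m₁ + m₂) / η - ωc * (x ^ 2 - m₁ * m₂) / η ^ 2‖ ≤ 2 * B * (1 + 1 / (η * p)) ^ 2 := by
  have hω : ‖ωc‖ = 1 := by rw [ωc_eq_ζ₁₂_pow_four, norm_pow, norm_ζ₁₂, one_pow]
  have hsum : ‖m₁ + m₂‖ ≤ 2 / p := (norm_add_le _ _).trans (by linarith [add_div 1 1 p])
  have hdiff : ‖x ^ 2 - m₁ * m₂‖ ≤ (B + 1) / p ^ 2 := by
    refine (norm_sub_le _ _).trans ?_
    rw [norm_pow, norm_mul, add_div]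
    gcongr
    calc ‖m₁‖ * ‖m₂‖ ≤ 1 / p * (1 / p) := by gcongr
      _ = 1 / p ^ 2 := by ring
  calc ‖1 + ρ * (m₁ + m₂) / η - ωc * (x ^ 2 - m₁ * m₂) / η ^ 2‖
      ≤ 1 + ‖m₁ + m₂‖ / η + ‖x ^ 2 - m₁ * m₂‖ / η ^ 2 := by
        refine (norm_sub_le _ _).trans (add_le_add ((norm_add_le _ _).trans ?_) ?_)
        · simp [hρ, abs_of_pos hη]
        · simp [hω]
    _ ≤ 1 + 2 / p / η + (B + 1) / p ^ 2 / η ^ 2 := by gcongr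
    _ = 1 + 2 * (1 / (η * p)) + (B + 1) * (1 / (η * p)) ^ 2 := by field_simp
    _ ≤ 2 * B * (1 + 1 / (η * p)) ^ 2 := by
        have : 0 ≤ 1 / (η * p) := by positivity
        nlinarith [sq_nonneg (1 / (η * p)), mul_nonneg this (sub_nonneg.mpr hB)]

/-- The approximation `F₁` to `D_f` at `z = q ^ 2`. -/
noncomputable def starkLeading (κ η f : ℝ) (q : ℂ) : ℂ :=
  gb (η / κ) (2 * κ * q) / (2 * q ^ 2 * η ^ 2) * Complex.exp (starkPhase κ f q)

lemma starkLeading_eq_exp_add_exp (hκ : κ ≠ 0) (hη : η ≠ 0) (hq : q ≠ 0) (f : ℝ) :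
    starkLeading κ η f q =
      Complex.exp (starkPhase κ f q + 2 * I * κ * q) * (1 / (2 * η * q) - I / (4 * η ^ 2 * q ^ 2)) +
      Complex.exp (starkPhase κ f q - 2 * I * κ * q) *
        (1 / (2 * η * q) + I / (4 * η ^ 2 * q ^ 2)) := by
  have hκ' : (κ : ℂ) ≠ 0 := by exact_mod_cast hκ
  have hη' : (η : ℂ) ≠ 0 := by exact_mod_cast hη
  rw [starkLeading, gb, Complex.sin, Complex.cos, Complex.exp_add,
    sub_eq_add_neg (starkPhase κ f q), Complex.exp_add,
    show -(2 * κ * q) * I = -(2 * I * κ * q) by ring,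
    show 2 * κ * q * I = 2 * I * κ * q by ring]
  push_cast
  field_simp
  ring

lemma re_two_mul_I_mul_mul (κ : ℝ) (q : ℂ) : (2 * I * κ * q).re = -(2 * κ * q.im) := by
  rw [show 2 * I * κ * q = I * ((2 * κ : ℝ) * q) by push_cast; ring, Complex.I_mul_re,
    Complex.im_ofReal_mul]

lemma norm_sub_starkLeading_le {D : ℂ} {ρ : ℝ} (hκ : 0 < κ) (hη : 0 < η) (hq : q ≠ 0)
    (him : q.im ≤ 0) (ht₀ : 0 ≤ t) (ht : t ≤ 1 / 2)
    (h₁ : IsWKBPair W q (starkPhase κ f q + 2 * I * κ * q) t X₁ R₁)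
    (h₂ : IsWKBPair W q (starkPhase κ f q - 2 * I * κ * q) t X₂ R₂)
    (hD : ‖D - dominantDet η W X₁ R₁ X₂ R₂‖ ≤ ρ) :
    ‖D - starkLeading κ η f q‖ ≤ 8 * t * (1 / (2 * η * ‖q‖) + 1 / (4 * η ^ 2 * ‖q‖ ^ 2)) *
      Real.exp ((starkPhase κ f q).re - 2 * κ * q.im) + ρ := by
  have hy : κ * q.im ≤ 0 := mul_nonpos_of_nonneg_of_nonpos hκ.le him
  have hexp₁ : ‖Complex.exp (starkPhase κ f q + 2 * I * κ * q)‖ ≤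
      Real.exp ((starkPhase κ f q).re - 2 * κ * q.im) := by
    rw [Complex.norm_exp, Complex.add_re, re_two_mul_I_mul_mul, sub_eq_add_neg]
  have hexp₂ : ‖Complex.exp (starkPhase κ f q - 2 * I * κ * q)‖ ≤
      Real.exp ((starkPhase κ f q).re - 2 * κ * q.im) := by
    rw [Complex.norm_exp, Real.exp_le_exp, Complex.sub_re, re_two_mul_I_mul_mul]
    linarith
  have hdom := norm_dominantDet_sub_le hη hq ht₀ ht h₁ h₂
  rw [← starkLeading_eq_exp_add_exp hκ.ne' hη.ne' hq] at hdom
  have htri := norm_sub_le_norm_sub_add_norm_sub D (dominantDet η W X₁ R₁ X₂ R₂)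
    (starkLeading κ η f q)
  have hA : 0 ≤ 4 * t * (1 / (2 * η * ‖q‖) + 1 / (4 * η ^ 2 * ‖q‖ ^ 2)) := by positivity
  nlinarith [mul_le_mul_of_nonneg_left (add_le_add hexp₁ hexp₂) hA]

lemma starkPhase_neg (κ f : ℝ) (q : ℂ) : starkPhase (-κ) f q = starkPhase κ f q := by
  simp [starkPhase]

lemma wkbError_neg (κ f : ℝ) (q : ℂ) : wkbError (-κ) f q = wkbError κ f q := by
  simp [wkbError]

lemma exists_isWKBPair_airyBranch_pair (hf : 0 < f) (hf1 : f ≤ 1) (hq : q ≠ 0)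
    (hE : wkbError κ f q ≤ 1 / 2) {c k : ℂ} (hc : c ^ 3 = -I) (hk : k ^ 2 = ζ₁₂ * c)
    (hcq : ‖q‖ / 2 ≤ (c * q).re) (hζq : ‖q‖ / 2 ≤ (ζ₁₂ * q).re) (hkq : ‖q‖ / 2 ≤ (k * q).re) :
    ∃ q₁ q₂ : ℂ, q₁ ^ 2 = q ^ 2 + κ * f ∧ q₂ ^ 2 = q ^ 2 - κ * f ∧
      IsWKBPair (Wf f) q (starkPhase κ f q + 2 * I * κ * q) (wkbError κ f q)
        (k * airyBranch f c q₁) (airyBranch f ζ₁₂ q₁) ∧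
      IsWKBPair (Wf f) q (starkPhase κ f q - 2 * I * κ * q) (wkbError κ f q)
        (k * airyBranch f c q₂) (airyBranch f ζ₁₂ q₂) := by
  obtain ⟨q₁, hq₁, h₁⟩ := exists_isWKBPair_airyBranch hf hf1 hq hE
  obtain ⟨q₂, hq₂, h₂⟩ := exists_isWKBPair_airyBranch (κ := -κ) hf hf1 hq (by rwa [wkbError_neg])
  refine ⟨q₁, q₂, hq₁, ?_, h₁ c k hc hk hcq hζq hkq, ?_⟩
  · rw [hq₂]; push_cast; ring
  · have h := h₂ c k hc hk hcq hζq hkq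
    rw [starkPhase_neg, wkbError_neg] at h
    convert h using 1
    push_cast
    ring

lemma norm_Df_sub_starkLeading_le_of_branch_inv (hκ : 0 < κ) (hη : 0 < η) (hf : 0 < f)
    (hf1 : f ≤ 1) (hq : q ≠ 0) (him : q.im ≤ 0) (hE : wkbError κ f q ≤ 1 / 2)
    (hcq : ‖q‖ / 2 ≤ (ζ₁₂⁻¹ * q).re) (hζq : ‖q‖ / 2 ≤ (ζ₁₂ * q).re) (hq1 : ‖q‖ / 2 ≤ q.re) :
    ‖Df κ η f (q ^ 2) - starkLeading κ η f q‖ ≤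
      8 * wkbError κ f q * (1 / (2 * η * ‖q‖) + 1 / (4 * η ^ 2 * ‖q‖ ^ 2)) *
          Real.exp ((starkPhase κ f q).re - 2 * κ * q.im) +
        2 * Real.exp (-(4 * κ * q.im)) * (1 + 1 / (η * ‖q‖)) ^ 2 := by
  have hc : ζ₁₂⁻¹ ^ 3 = -I := by rw [inv_pow, ζ₁₂_pow_three, Complex.inv_I]
  have hE₀ := wkbError_nonneg hf κ q
  obtain ⟨q₁, q₂, hq₁, hq₂, h₁, h₂⟩ := exists_isWKBPair_airyBranch_pair hf hf1 hq hE hc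
    (by rw [one_pow, mul_inv_cancel₀ ζ₁₂_ne_zero]) hcq hζq (by rwa [one_mul])
  refine norm_sub_starkLeading_le hκ hη hq him hE₀ hE h₁ h₂ ?_
  rw [Df_sub_dominantDet_eq_of_branch_inv hf hq₁ hq₂ (one_mul _) (one_mul _) rfl rfl]
  refine norm_remainder_le hη (norm_pos_iff.mpr hq) (Real.one_le_exp ?_) ?_
    (h₁.norm_mul_le hE₀ hE) (h₂.norm_mul_le hE₀ hE) ?_
  · nlinarith
  · rw [norm_neg, ωc_eq_ζ₁₂_pow_four, norm_pow, norm_pow, norm_ζ₁₂, one_pow, one_pow]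
  · refine (h₁.norm_cross_sq_le h₂ hE₀ hE).trans_eq ?_
    rw [Complex.norm_exp, Complex.sub_re, Complex.add_re, Complex.sub_re, re_two_mul_I_mul_mul]
    ring_nf

lemma norm_Df_sub_starkLeading_le_of_branch_cube (hκ : 0 < κ) (hη : 0 < η) (hf : 0 < f)
    (hf1 : f ≤ 1) (hq : q ≠ 0) (him : q.im ≤ 0) (hE : wkbError κ f q ≤ 1 / 2)
    (hcq : ‖q‖ / 2 ≤ (ζ₁₂ ^ 3 * q).re) (hζq : ‖q‖ / 2 ≤ (ζ₁₂ * q).re)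
    (hkq : ‖q‖ / 2 ≤ (ζ₁₂ ^ 2 * q).re) :
    ‖Df κ η f (q ^ 2) - starkLeading κ η f q‖ ≤
      8 * wkbError κ f q * (1 / (2 * η * ‖q‖) + 1 / (4 * η ^ 2 * ‖q‖ ^ 2)) *
          Real.exp ((starkPhase κ f q).re - 2 * κ * q.im) +
        2 * (1 + 1 / (η * ‖q‖)) ^ 2 := by
  have hc : (ζ₁₂ ^ 3) ^ 3 = -I := by rw [ζ₁₂_pow_three, Complex.I_pow_three]
  have hk : -ωc ^ 2 = ζ₁₂ ^ 2 := by
    rw [ωc_eq_ζ₁₂_pow_four]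
    linear_combination -ζ₁₂ ^ 2 * ζ₁₂_pow_six
  have hE₀ := wkbError_nonneg hf κ q
  obtain ⟨q₁, q₂, hq₁, hq₂, h₁, h₂⟩ := exists_isWKBPair_airyBranch_pair hf hf1 hq hE hc
    (by ring) hcq hζq hkq
  refine norm_sub_starkLeading_le hκ hη hq him hE₀ hE h₁ h₂ ?_
  rw [Df_sub_dominantDet_eq_of_branch_cube hf hq₁ hq₂ (by rw [hk]) (by rw [hk]) rfl rfl]
  refine (norm_remainder_le hη (norm_pos_iff.mpr hq) le_rfl ?_ (h₁.norm_mul_le hE₀ hE)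
    (h₂.norm_mul_le hE₀ hE) ?_).trans_eq (by rw [mul_one])
  · rw [ωc_eq_ζ₁₂_pow_four, norm_pow, norm_pow, norm_ζ₁₂, one_pow, one_pow]
  · refine (h₂.norm_cross_sq_le h₁ hE₀ hE).trans ?_
    gcongr
    rw [Complex.norm_exp, Real.exp_le_one_iff, Complex.sub_re, Complex.sub_re, Complex.add_re,
      re_two_mul_I_mul_mul]
    nlinarith

end StarkDeterminant

section PolarMomentum

open Complex (I)

/-- The momentum `p e^{-iφ}`. -/
noncomputable def polarMomentum (p φ : ℝ) : ℂ := p * Complex.exp ((-φ : ℝ) * I)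

variable {κ η f p φ L M : ℝ}

lemma norm_polarMomentum (hp : 0 < p) (φ : ℝ) : ‖polarMomentum p φ‖ = p := by
  rw [polarMomentum, norm_mul, Complex.norm_exp_ofReal_mul_I, mul_one, Complex.norm_real,
    Real.norm_of_nonneg hp.le]

lemma polarMomentum_ne_zero (hp : 0 < p) (φ : ℝ) : polarMomentum p φ ≠ 0 := by
  rwa [← norm_pos_iff, norm_polarMomentum hp]

lemma polarMomentum_im (p φ : ℝ) : (polarMomentum p φ).im = -(p * Real.sin φ) := by
  rw [polarMomentum, Complex.im_ofReal_mul, Complex.exp_ofReal_mul_I_im, Real.sin_neg, mul_neg]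

lemma starkPhase_polarMomentum_re (hp : 0 < p) (κ f φ : ℝ) :
    (starkPhase κ f (polarMomentum p φ)).re =
      4 * p ^ 3 / (3 * f) * Real.sin (3 * φ) - κ ^ 2 * f / (2 * p) * Real.sin φ := by
  have : (p : ℂ) ≠ 0 := by exact_mod_cast hp.ne'
  have h3 : polarMomentum p φ ^ 3 = p ^ 3 * Complex.exp ((-(3 * φ) : ℝ) * I) := by
    rw [polarMomentum, mul_pow, ← Complex.exp_nat_mul]
    push_cast
    ring_nf
  have hinv : (polarMomentum p φ)⁻¹ = p⁻¹ * Complex.exp (φ * I) := by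
    rw [polarMomentum, mul_inv, ← Complex.exp_neg]
    push_cast
    ring_nf
  have hsplit : starkPhase κ f (polarMomentum p φ) =
      ((4 * p ^ 3 / (3 * f) : ℝ) : ℂ) * (I * Complex.exp ((-(3 * φ) : ℝ) * I)) +
        ((κ ^ 2 * f / (2 * p) : ℝ) : ℂ) * (I * Complex.exp (φ * I)) := by
    rw [starkPhase, div_eq_mul_inv (I * f * κ ^ 2), mul_inv, hinv, h3]
    push_cast
    ring
  rw [hsplit, Complex.add_re, Complex.re_ofReal_mul, Complex.re_ofReal_mul, Complex.I_mul_re,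
    Complex.I_mul_re, Complex.exp_ofReal_mul_I_im, Complex.exp_ofReal_mul_I_im, Real.sin_neg]
  ring

lemma half_norm_le_re_zpow_mul_polarMomentum (hp : 0 < p) (n : ℤ) (h : |n * (π / 6) - φ| ≤ π / 3) :
    ‖polarMomentum p φ‖ / 2 ≤ (ζ₁₂ ^ n * polarMomentum p φ).re := by
  have hprod : ζ₁₂ ^ n * polarMomentum p φ = p * Complex.exp ((n * (π / 6) - φ : ℝ) * I) := by
    rw [ζ₁₂, polarMomentum, ← Complex.exp_int_mul, mul_left_comm, ← Complex.exp_add]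
    push_cast
    ring_nf
  rw [hprod, norm_polarMomentum hp, Complex.re_ofReal_mul, Complex.exp_ofReal_mul_I_re,
    ← Real.cos_abs, div_eq_mul_one_div, ← Real.cos_pi_div_three]
  gcongr
  exact Real.cos_le_cos_of_nonneg_of_le_pi (abs_nonneg _) (by linarith [Real.pi_pos]) h

lemma norm_Df_sub_starkLeading_polar_le {Y : ℝ} (hκ : 0 < κ) (hη : 0 < η) (hf : 0 < f)
    (hf1 : f ≤ 1) (hp : 0 < p) (hφ₀ : 0 ≤ φ) (hφ : φ ≤ π / 3)
    (hE : wkbError κ f (polarMomentum p φ) ≤ 1 / 2) (hY₀ : 0 ≤ Y)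
    (hY : φ ≤ π / 6 → 4 * κ * p * Real.sin φ ≤ Y) :
    ‖Df κ η f (polarMomentum p φ ^ 2) - starkLeading κ η f (polarMomentum p φ)‖ ≤
      8 * wkbError κ f (polarMomentum p φ) * (1 / (2 * η * p) + 1 / (4 * η ^ 2 * p ^ 2)) *
          Real.exp ((starkPhase κ f (polarMomentum p φ)).re + 2 * κ * p * Real.sin φ) +
        2 * Real.exp Y * (1 + 1 / (η * p)) ^ 2 := by
  have hq := polarMomentum_ne_zero hp φ
  have him : (polarMomentum p φ).im ≤ 0 := by
    have := Real.sin_nonneg_of_nonneg_of_le_pi hφ₀ (by linarith)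
    rw [polarMomentum_im, neg_nonpos]
    positivity
  have hcone (n : ℤ) := half_norm_le_re_zpow_mul_polarMomentum (φ := φ) hp n
  have hζ : ‖polarMomentum p φ‖ / 2 ≤ (ζ₁₂ * polarMomentum p φ).re := by
    simpa using hcone 1 (abs_le.mpr ⟨by push_cast; linarith, by push_cast; linarith⟩)
  rw [show (starkPhase κ f (polarMomentum p φ)).re + 2 * κ * p * Real.sin φ =
    (starkPhase κ f (polarMomentum p φ)).re - 2 * κ * (polarMomentum p φ).im by
      rw [polarMomentum_im]; ring]
  rcases le_total φ (π / 6) with hle | hle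
  · have h := norm_Df_sub_starkLeading_le_of_branch_inv hκ hη hf hf1 hq him hE
      (by simpa using hcone (-1) (abs_le.mpr ⟨by push_cast; linarith, by push_cast; linarith⟩)) hζ
      (by simpa using hcone 0 (abs_le.mpr ⟨by push_cast; linarith, by push_cast; linarith⟩))
    rw [norm_polarMomentum hp] at h
    refine h.trans ?_
    gcongr
    rw [polarMomentum_im]
    linarith [hY hle]
  · have h := norm_Df_sub_starkLeading_le_of_branch_cube hκ hη hf hf1 hq him hE
      (by simpa using hcone 3 (abs_le.mpr ⟨by push_cast; linarith, by push_cast; linarith⟩)) hζ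
      (by simpa using hcone 2 (abs_le.mpr ⟨by push_cast; linarith, by push_cast; linarith⟩))
    rw [norm_polarMomentum hp] at h
    refine h.trans ?_
    gcongr
    linarith [Real.one_le_exp hY₀]

lemma two_div_pi_mul_le_sin {x δ : ℝ} (hδ : 0 ≤ δ) (h₁ : δ ≤ x) (h₂ : x ≤ π - δ) :
    2 / π * δ ≤ Real.sin x := by
  rcases le_total x (π / 2) with h | h
  · calc 2 / π * δ ≤ 2 / π * x := by gcongr
      _ ≤ Real.sin x := Real.mul_le_sin (by linarith) h
  · calc 2 / π * δ ≤ 2 / π * (π - x) := by gcongr; linarith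
      _ ≤ Real.sin (π - x) := Real.mul_le_sin (by linarith) (by linarith)
      _ = Real.sin x := Real.sin_pi_sub x

lemma two_mul_sin_le_sin_three_mul (h₀ : 0 ≤ φ) (h : φ ≤ π / 6) :
    2 * Real.sin φ ≤ Real.sin (3 * φ) := by
  have hs₀ := Real.sin_nonneg_of_nonneg_of_le_pi h₀ (by linarith [Real.pi_pos])
  have hs : Real.sin φ ≤ 1 / 2 := by
    rw [← Real.sin_pi_div_six]
    exact Real.sin_le_sin_of_le_of_le_pi_div_two (by linarith [Real.pi_pos]) (by linarith) h
  rw [Real.sin_three_mul]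
  nlinarith [mul_nonneg hs₀ (mul_nonneg (sub_nonneg.mpr hs) hs₀)]

lemma le_two_mul_mul_sin_of_sector (hκ : 0 < κ) (hf : 0 < f) (hp : 0 < p) (hL : 0 ≤ L)
    (hM : 3 ≤ M) (h₁ : M * f * L / p ^ 3 ≤ 2 * φ) (h₂ : 2 * φ ≤ 2 * π / 3) :
    κ * f * L / p ^ 2 ≤ 2 * κ * p * Real.sin φ := by
  have hδ : 3 * f * L / p ^ 3 ≤ M * f * L / p ^ 3 := by gcongr
  have hsin : 2 / π * φ ≤ Real.sin φ := Real.mul_le_sin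
    (by linarith [show 0 ≤ 3 * f * L / p ^ 3 by positivity]) (by linarith [Real.pi_pos])
  calc κ * f * L / p ^ 2 ≤ 6 / π * (κ * f * L / p ^ 2) := by
        refine le_mul_of_one_le_left (by positivity) ?_
        rw [one_le_div Real.pi_pos]
        linarith [Real.pi_lt_four]
    _ = 2 * κ * p * (2 / π * (3 * f * L / p ^ 3 / 2)) := by field_simp; ring
    _ ≤ 2 * κ * p * (2 / π * φ) := by gcongr; linarith
    _ ≤ 2 * κ * p * Real.sin φ := by gcongr

lemma le_main_phase_of_sector (hf : 0 < f) (hp : 0 < p) (hL : 0 ≤ L) (hM : 3 ≤ M)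
    (h₁ : M * f * L / p ^ 3 ≤ 2 * φ) (h₂ : 2 * φ ≤ 2 * π / 3 - M * f * L / p ^ 3) :
    3 * L ≤ 4 * p ^ 3 / (3 * f) * Real.sin (3 * φ) := by
  have hδ : 3 * f * L / p ^ 3 ≤ M * f * L / p ^ 3 := by gcongr
  have hsin := two_div_pi_mul_le_sin (x := 3 * φ) (δ := 3 / 2 * (3 * f * L / p ^ 3))
    (by positivity) (by linarith) (by linarith)
  calc 3 * L ≤ 12 / π * L := by
        gcongr
        rw [le_div_iff₀ Real.pi_pos]
        linarith [Real.pi_lt_four]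
    _ = 4 * p ^ 3 / (3 * f) * (2 / π * (3 / 2 * (3 * f * L / p ^ 3))) := by field_simp; ring
    _ ≤ 4 * p ^ 3 / (3 * f) * Real.sin (3 * φ) := by gcongr

lemma exists_phase_gap (hκ : 0 < κ) (hf : 0 < f) (hp : 0 < p) (hκf : κ * f / p ^ 2 ≤ 1 / 8)
    (hL : 0 ≤ L) (hM : 3 ≤ M) (h₁ : M * f * L / p ^ 3 ≤ 2 * φ)
    (h₂ : 2 * φ ≤ 2 * π / 3 - M * f * L / p ^ 3) :
    ∃ Y, 0 ≤ Y ∧ (φ ≤ π / 6 → 4 * κ * p * Real.sin φ ≤ Y) ∧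
      5 / 2 * L + Y ≤
        (starkPhase κ f (polarMomentum p φ)).re + 2 * κ * p * Real.sin φ := by
  have hδ : 0 ≤ M * f * L / p ^ 3 := by positivity
  have hs : 0 ≤ Real.sin φ := Real.sin_nonneg_of_nonneg_of_le_pi (by linarith)
    (by linarith [Real.pi_pos])
  have hmain := le_main_phase_of_sector hf hp hL hM h₁ h₂
  rw [starkPhase_polarMomentum_re hp]
  set E := 4 * p ^ 3 / (3 * f) * Real.sin (3 * φ) with hE
  set y := 2 * κ * p * Real.sin φ with hy
  have hy₀ : 0 ≤ y := by positivity
  have hcorr : κ ^ 2 * f / (2 * p) * Real.sin φ ≤ y / 32 := by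
    calc κ ^ 2 * f / (2 * p) * Real.sin φ = κ * f / p ^ 2 * (y / 4) := by rw [hy]; field_simp; ring
      _ ≤ 1 / 8 * (y / 4) := by gcongr
      _ = y / 32 := by ring
  rcases le_or_gt φ (π / 6) with hle | hle
  · have hyE : y ≤ 3 / 32 * E := by
      calc y = κ * p * (2 * Real.sin φ) := by rw [hy]; ring
        _ ≤ κ * p * Real.sin (3 * φ) := by
          gcongr
          exact two_mul_sin_le_sin_three_mul (by linarith) hle
        _ = κ * f / p ^ 2 * (3 / 4 * E) := by rw [hE]; field_simp
        _ ≤ 1 / 8 * (3 / 4 * E) := by gcongr; linarith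
        _ = 3 / 32 * E := by ring
    exact ⟨2 * y, by linarith, fun _ => by rw [hy]; linarith, by linarith⟩
  · exact ⟨0, le_rfl, fun h => absurd h hle.not_ge, by linarith⟩

lemma pow_three_div_le_exp_log (hf : 0 < f) (hp : 0 < p) :
    p ^ 3 / f ≤ Real.exp (5 / 2 * Real.log (p ^ 2 + f⁻¹)) := by
  have hf' : 0 < f⁻¹ := inv_pos.mpr hf
  have hp2 : Real.log (p ^ 2) ≤ Real.log (p ^ 2 + f⁻¹) :=
    Real.log_le_log (by positivity) (by linarith)
  have hfi : Real.log f⁻¹ ≤ Real.log (p ^ 2 + f⁻¹) :=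
    Real.log_le_log hf' (by linarith [sq_nonneg p])
  calc p ^ 3 / f = Real.exp (3 / 2 * Real.log (p ^ 2) + Real.log f⁻¹) := by
        rw [Real.log_pow, Real.exp_add, Real.exp_log hf',
          show 3 / 2 * ((2 : ℕ) * Real.log p) = (3 : ℕ) * Real.log p by push_cast; ring,
          ← Real.log_pow, Real.exp_log (by positivity), div_eq_mul_inv]
    _ ≤ Real.exp (5 / 2 * Real.log (p ^ 2 + f⁻¹)) := by
        gcongr
        linarith

lemma exp_le_div_mul_exp_of_log_gap {Y Z : ℝ} (hf : 0 < f) (hp : 0 < p)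
    (h : 5 / 2 * Real.log (p ^ 2 + f⁻¹) + Y ≤ Z) : Real.exp Y ≤ f / p ^ 3 * Real.exp Z := by
  have hprod : p ^ 3 / f * Real.exp Y ≤ Real.exp Z :=
    calc p ^ 3 / f * Real.exp Y
        ≤ Real.exp (5 / 2 * Real.log (p ^ 2 + f⁻¹)) * Real.exp Y := by
          gcongr
          exact pow_three_div_le_exp_log hf hp
      _ ≤ Real.exp Z := by rw [← Real.exp_add]; gcongr
  calc Real.exp Y = f / p ^ 3 * (p ^ 3 / f * Real.exp Y) := by field_simp
    _ ≤ f / p ^ 3 * Real.exp Z := by gcongr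

lemma dominant_amplitude_le (hη : 0 < η) (hp : 0 < p) :
    1 / (2 * η * p) + 1 / (4 * η ^ 2 * p ^ 2) ≤
      (1 / (2 * η) + 1 / (4 * η ^ 2)) * ((1 + p) / p ^ 2) :=
  calc 1 / (2 * η * p) + 1 / (4 * η ^ 2 * p ^ 2)
      = 1 / (2 * η) * (p / p ^ 2) + 1 / (4 * η ^ 2) * (1 / p ^ 2) := by field_simp
    _ ≤ 1 / (2 * η) * ((1 + p) / p ^ 2) + 1 / (4 * η ^ 2) * ((1 + p) / p ^ 2) := by
      gcongr <;> linarith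
    _ = (1 / (2 * η) + 1 / (4 * η ^ 2)) * ((1 + p) / p ^ 2) := by ring

lemma recessive_amplitude_le (hη : 0 < η) (hp : 0 < p) :
    1 + 1 / (η * p) ≤ (1 + 1 / η) * ((1 + p) / p) :=
  calc 1 + 1 / (η * p) = p / p + 1 / η * (1 / p) := by field_simp
    _ ≤ (1 + p) / p + 1 / η * ((1 + p) / p) := by gcongr <;> linarith
    _ = (1 + 1 / η) * ((1 + p) / p) := by ring

/-- The constant in the bound for `D_f - F₁` by multiples of `f (1 + p)² / p⁵`. -/
noncomputable def starkErrorConst (κ η : ℝ) : ℝ :=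
  8 * (1800 + 4 * |κ| + 2 * |κ| ^ 3) * (1 / (2 * η) + 1 / (4 * η ^ 2)) + 2 * (1 + 1 / η) ^ 2

lemma norm_Df_sub_starkLeading_le_of_sector (hκ : 0 < κ) (hη : 0 < η) (hf : 0 < f) (hf1 : f ≤ 1)
    (hp : 0 < p) (hE : wkbError κ f (polarMomentum p φ) ≤ 1 / 2)
    (hL : L = Real.log (p ^ 2 + f⁻¹)) (hL₀ : 0 ≤ L) (hM : 3 ≤ M)
    (h₁ : M * f * L / p ^ 3 ≤ 2 * φ) (h₂ : 2 * φ ≤ 2 * π / 3 - M * f * L / p ^ 3) :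
    ‖Df κ η f (polarMomentum p φ ^ 2) - starkLeading κ η f (polarMomentum p φ)‖ ≤
      starkErrorConst κ η * (f * (1 + p) ^ 2 / p ^ 5) *
        Real.exp ((starkPhase κ f (polarMomentum p φ)).re + 2 * κ * p * Real.sin φ) := by
  have hδ : 0 ≤ M * f * L / p ^ 3 := by positivity
  have hκf : κ * f / p ^ 2 ≤ 1 / 8 := by
    have h := norm_mul_div_sq_le_wkbError hf κ (polarMomentum_ne_zero hp φ)
    rw [norm_div, norm_mul, norm_pow, norm_polarMomentum hp, Complex.norm_real, Complex.norm_real,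
      Real.norm_of_nonneg hκ.le, Real.norm_of_nonneg hf.le] at h
    linarith
  obtain ⟨Y, hY₀, hY, hgap⟩ := exists_phase_gap hκ hf hp hκf hL₀ hM h₁ h₂
  have h := norm_Df_sub_starkLeading_polar_le hκ hη hf hf1 hp (by linarith) (by linarith) hE hY₀ hY
  rw [wkbError, norm_polarMomentum hp] at h
  set Z := (starkPhase κ f (polarMomentum p φ)).re + 2 * κ * p * Real.sin φ
  have hexpY := exp_le_div_mul_exp_of_log_gap hf hp (hL ▸ hgap)
  have hamp₁ := dominant_amplitude_le hη hp
  have hamp₂ := recessive_amplitude_le hη hp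
  refine h.trans ?_
  calc _ ≤ 8 * ((1800 + 4 * |κ| + 2 * |κ| ^ 3) * (f * (1 + p) / p ^ 3)) *
          ((1 / (2 * η) + 1 / (4 * η ^ 2)) * ((1 + p) / p ^ 2)) * Real.exp Z +
        2 * (f / p ^ 3 * Real.exp Z) * ((1 + 1 / η) * ((1 + p) / p)) ^ 2 := by gcongr
    _ = starkErrorConst κ η * (f * (1 + p) ^ 2 / p ^ 5) * Real.exp Z := by
      rw [starkErrorConst]
      field_simp

end PolarMomentum

section LowerBound

open scoped ComplexConjugate

variable {b κ η f p φ L A : ℝ} {w : ℂ}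

lemma gb_mul_conj_cos (b : ℝ) (w : ℂ) :
    gb b w * conj (Complex.cos w) =
      ⟨Real.sin (2 * w.re) / 2 + b * w.re * ‖Complex.cos w‖ ^ 2,
        Real.sinh (2 * w.im) / 2 + b * w.im * ‖Complex.cos w‖ ^ 2⟩ := by
  have hre : 2 * (w.re : ℂ) = w + conj w := by rw [Complex.add_conj]; push_cast; rfl
  have him : 2 * (w.im : ℂ) * Complex.I = w - conj w := by rw [Complex.sub_conj]; push_cast; rfl
  have hsc : Complex.sin w * conj (Complex.cos w) =
      Complex.sin (2 * w.re) / 2 + Complex.sinh (2 * w.im) / 2 * Complex.I := by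
    rw [← Complex.cos_conj, div_mul_eq_mul_div, ← Complex.sin_mul_I, hre, him, Complex.sin_add,
      Complex.sin_sub]
    ring
  have hcc := Complex.mul_conj' (Complex.cos w)
  rw [gb, Complex.mk_eq_add_mul_I]
  push_cast
  linear_combination hsc + b * w * hcc - b * (‖Complex.cos w‖ : ℂ) ^ 2 * Complex.re_add_im w

lemma norm_cos_sq (w : ℂ) : ‖Complex.cos w‖ ^ 2 = Real.cos w.re ^ 2 + Real.sinh w.im ^ 2 := by
  have h : Complex.cos w = ((Real.cos w.re * Real.cosh w.im : ℝ) : ℂ) +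
      ((-(Real.sin w.re * Real.sinh w.im) : ℝ) : ℂ) * Complex.I := by
    rw [Complex.cos_eq]
    push_cast
    ring
  rw [h, ← Complex.normSq_eq_norm_sq, Complex.normSq_add_mul_I]
  linear_combination Real.cos w.re ^ 2 * Real.cosh_sq w.im +
    Real.sinh w.im ^ 2 * Real.sin_sq_add_cos_sq w.re

lemma sinh_neg_im_le_norm_cos (w : ℂ) : Real.sinh (-w.im) ≤ ‖Complex.cos w‖ := by
  refine le_of_sq_le_sq ?_ (norm_nonneg _)
  rw [norm_cos_sq, Real.sinh_neg, neg_sq]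
  linarith [sq_nonneg (Real.cos w.re)]

lemma mul_abs_re_mul_norm_cos_le_two
    (h : b * |w.re| * ‖Complex.cos w‖ ^ 2 ≤ |Real.sin (2 * w.re)|) :
    b * |w.re| * ‖Complex.cos w‖ ≤ 2 := by
  have hcos : |Real.cos w.re| ≤ ‖Complex.cos w‖ :=
    abs_le_of_sq_le_sq (by rw [norm_cos_sq]; linarith [sq_nonneg (Real.sinh w.im)]) (norm_nonneg _)
  have hsin : |Real.sin (2 * w.re)| ≤ 2 * ‖Complex.cos w‖ := by
    rw [Real.sin_two_mul, abs_mul, abs_mul, abs_two]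
    nlinarith [Real.abs_sin_le_one w.re, abs_nonneg (Real.cos w.re)]
  rcases (norm_nonneg (Complex.cos w)).eq_or_lt with h0 | h0
  · rw [← h0, mul_zero]
    exact zero_le_two
  · refine le_of_mul_le_mul_right ?_ h0
    linarith

lemma re_part_le_norm_gb_mul_norm_cos (hb : 0 ≤ b)
    (h : |Real.sin (2 * w.re)| ≤ b * |w.re| * ‖Complex.cos w‖ ^ 2) :
    b * |w.re| * ‖Complex.cos w‖ ^ 2 / 2 ≤ ‖gb b w‖ * ‖Complex.cos w‖ := by
  have hre := Complex.abs_re_le_norm (gb b w * conj (Complex.cos w))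
  rw [norm_mul, Complex.norm_conj, gb_mul_conj_cos] at hre
  have htri := abs_sub_abs_le_abs_sub (b * w.re * ‖Complex.cos w‖ ^ 2)
    (-(Real.sin (2 * w.re) / 2))
  rw [abs_mul, abs_mul, abs_of_nonneg hb, abs_of_nonneg (sq_nonneg ‖_‖), abs_neg, abs_div, abs_two,
    sub_neg_eq_add, add_comm (b * w.re * _)] at htri
  linarith

lemma im_part_le_norm_gb_mul_norm_cos (b : ℝ) (him : w.im ≤ 0) :
    Real.sinh (-w.im) + b * -w.im * ‖Complex.cos w‖ ^ 2 ≤ ‖gb b w‖ * ‖Complex.cos w‖ := by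
  have h := (neg_le_abs _).trans (Complex.abs_im_le_norm (gb b w * conj (Complex.cos w)))
  rw [norm_mul, Complex.norm_conj, gb_mul_conj_cos] at h
  have hsinh : -Real.sinh (2 * w.im) / 2 = Real.sinh (-w.im) * Real.cosh w.im := by
    rw [Real.sinh_two_mul, Real.sinh_neg]
    ring
  have hcosh := le_mul_of_one_le_right (Real.sinh_nonneg_iff.mpr (neg_nonneg.mpr him))
    (Real.one_le_cosh w.im)
  linarith

lemma mul_norm_mul_sinh_le_norm_gb (hb : 0 ≤ b) (him : w.im ≤ 0) :
    b / 4 * ‖w‖ * Real.sinh (-w.im) ≤ ‖gb b w‖ := by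
  have hSC := sinh_neg_im_le_norm_cos w
  have him' := im_part_le_norm_gb_mul_norm_cos b him
  have hw : ‖w‖ ≤ |w.re| + -w.im := by
    rw [← abs_of_nonpos him]
    exact Complex.norm_le_abs_re_add_abs_im w
  have hy : 0 ≤ -w.im := neg_nonneg.mpr him
  rcases (Real.sinh_nonneg_iff.mpr hy).eq_or_lt with hS | hS
  · rw [← hS, mul_zero]
    exact norm_nonneg _
  refine le_of_mul_le_mul_right ?_ (hS.trans_le hSC)
  rcases le_total |Real.sin (2 * w.re)| (b * |w.re| * ‖Complex.cos w‖ ^ 2) with hle | hle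
  · have hre := re_part_le_norm_gb_mul_norm_cos hb hle
    calc b / 4 * ‖w‖ * Real.sinh (-w.im) * ‖Complex.cos w‖
        ≤ b / 4 * (|w.re| + -w.im) * ‖Complex.cos w‖ * ‖Complex.cos w‖ := by gcongr
      _ ≤ ‖gb b w‖ * ‖Complex.cos w‖ := by
        linarith [show 0 ≤ b * -w.im * ‖Complex.cos w‖ ^ 2 by positivity]
  · have hre := mul_abs_re_mul_norm_cos_le_two hle
    calc b / 4 * ‖w‖ * Real.sinh (-w.im) * ‖Complex.cos w‖
        ≤ b / 4 * (|w.re| + -w.im) * Real.sinh (-w.im) * ‖Complex.cos w‖ := by gcongr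
      _ = b * |w.re| * ‖Complex.cos w‖ * (Real.sinh (-w.im) / 4) +
          b * -w.im * (Real.sinh (-w.im) * ‖Complex.cos w‖) / 4 := by ring
      _ ≤ 2 * (Real.sinh (-w.im) / 4) +
          b * -w.im * (‖Complex.cos w‖ * ‖Complex.cos w‖) / 4 := by gcongr
      _ ≤ ‖gb b w‖ * ‖Complex.cos w‖ := by
        linarith [show 0 ≤ b * -w.im * ‖Complex.cos w‖ ^ 2 by positivity]

lemma exp_mul_div_le_sinh {x y : ℝ} (hx : 0 ≤ x) (hxy : x ≤ y) :
    Real.exp y * (x / (1 + 2 * x)) ≤ Real.sinh y := by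
  have hexp : Real.exp y * Real.exp (-(2 * y)) = Real.exp (-y) := by rw [← Real.exp_add]; ring_nf
  have hle : Real.exp (-(2 * y)) ≤ 1 / (1 + 2 * x) := by
    rw [Real.exp_neg, ← one_div]
    gcongr
    linarith [Real.add_one_le_exp (2 * y)]
  calc Real.exp y * (x / (1 + 2 * x)) = Real.exp y * (1 - 1 / (1 + 2 * x)) / 2 := by
        field_simp
        ring
    _ ≤ Real.exp y * (1 - Real.exp (-(2 * y))) / 2 := by gcongr
    _ = Real.sinh y := by rw [Real.sinh_eq, mul_sub, hexp, mul_one]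

lemma norm_sin_sub_self_le (hw : ‖w‖ ≤ 1) : ‖Complex.sin w - w‖ ≤ ‖w‖ ^ 2 := by
  have h₁ := Complex.norm_exp_sub_one_sub_id_le (x := w * Complex.I) (by simpa)
  have h₂ := Complex.norm_exp_sub_one_sub_id_le (x := -w * Complex.I) (by simpa)
  simp only [norm_mul, norm_neg, Complex.norm_I, mul_one] at h₁ h₂
  calc ‖Complex.sin w - w‖ = ‖(Complex.exp (-w * Complex.I) - 1 - -w * Complex.I) -
        (Complex.exp (w * Complex.I) - 1 - w * Complex.I)‖ / 2 := by
        rw [← mul_one (‖_ - _‖ / 2), ← Complex.norm_I, div_mul_eq_mul_div, ← norm_mul,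
          ← Complex.norm_two, ← norm_div, Complex.sin]
        congr 1
        linear_combination (-w) * Complex.I_sq
    _ ≤ (‖w‖ ^ 2 + ‖w‖ ^ 2) / 2 := by
        gcongr
        exact (norm_sub_le _ _).trans (add_le_add h₂ h₁)
    _ = ‖w‖ ^ 2 := by ring

lemma norm_cos_sub_one_le (hw : ‖w‖ ≤ 1) : ‖Complex.cos w - 1‖ ≤ ‖w‖ ^ 2 := by
  have h₁ := Complex.norm_exp_sub_one_sub_id_le (x := w * Complex.I) (by simpa)
  have h₂ := Complex.norm_exp_sub_one_sub_id_le (x := -w * Complex.I) (by simpa)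
  simp only [norm_mul, norm_neg, Complex.norm_I, mul_one] at h₁ h₂
  calc ‖Complex.cos w - 1‖ = ‖(Complex.exp (w * Complex.I) - 1 - w * Complex.I) +
        (Complex.exp (-w * Complex.I) - 1 - -w * Complex.I)‖ / 2 := by
        rw [← Complex.norm_two, ← norm_div, Complex.cos]
        ring_nf
    _ ≤ (‖w‖ ^ 2 + ‖w‖ ^ 2) / 2 := by
        gcongr
        exact (norm_add_le _ _).trans (add_le_add h₁ h₂)
    _ = ‖w‖ ^ 2 := by ring

lemma half_norm_le_norm_gb (hb : 0 ≤ b) (hw : ‖w‖ ≤ 1 / 2) : ‖w‖ / 2 ≤ ‖gb b w‖ := by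
  have hsin := norm_sin_sub_self_le (hw.trans (by norm_num))
  have hcos := norm_cos_sub_one_le (hw.trans (by norm_num))
  have hrem : ‖(Complex.sin w - w) + b * w * (Complex.cos w - 1)‖ ≤ (1 + b) * ‖w‖ ^ 2 := by
    refine (norm_add_le _ _).trans ?_
    rw [norm_mul, norm_mul, Complex.norm_real, Real.norm_of_nonneg hb, add_mul, one_mul]
    refine add_le_add hsin ?_
    calc b * ‖w‖ * ‖Complex.cos w - 1‖ ≤ b * 1 * ‖w‖ ^ 2 := by gcongr; linarith
      _ = b * ‖w‖ ^ 2 := by rw [mul_one]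
  have hmain : ‖((1 + b : ℝ) : ℂ) * w‖ = (1 + b) * ‖w‖ := by
    rw [norm_mul, Complex.norm_real, Real.norm_of_nonneg (by linarith)]
  have htri := norm_sub_le (gb b w) ((Complex.sin w - w) + b * w * (Complex.cos w - 1))
  rw [show gb b w - ((Complex.sin w - w) + b * w * (Complex.cos w - 1)) = ((1 + b : ℝ) : ℂ) * w by
    rw [gb]; push_cast; ring, hmain] at htri
  nlinarith [norm_nonneg w, mul_nonneg hb (norm_nonneg w)]

lemma norm_two_mul_polarMomentum (hκ : 0 < κ) (hp : 0 < p) (φ : ℝ) :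
    ‖2 * (κ : ℂ) * polarMomentum p φ‖ = 2 * κ * p := by
  rw [norm_mul, norm_mul, Complex.norm_two, Complex.norm_real, Real.norm_of_nonneg hκ.le,
    norm_polarMomentum hp]

lemma two_mul_polarMomentum_im (κ p φ : ℝ) :
    (2 * (κ : ℂ) * polarMomentum p φ).im = -(2 * κ * p * Real.sin φ) := by
  rw [← Complex.ofReal_ofNat, ← Complex.ofReal_mul, Complex.im_ofReal_mul, polarMomentum_im]
  ring

lemma le_norm_gb_of_small (hκ : 0 < κ) (hη : 0 < η) (hp : 0 < p) (hA : 0 < A)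
    (hfL : f * L ≤ A * p ^ 4) (hps : p ≤ 1 / (4 * κ)) :
    κ / (2 * A * (1 + 1 / (4 * κ)) ^ 2) * (f * L * (1 + p) ^ 2 / p ^ 3) *
      Real.exp (2 * κ * p * Real.sin φ) ≤ ‖gb (η / κ) (2 * κ * polarMomentum p φ)‖ := by
  have hw : ‖2 * (κ : ℂ) * polarMomentum p φ‖ ≤ 1 / 2 := by
    rw [norm_two_mul_polarMomentum hκ hp]
    rw [le_div_iff₀ (by positivity)] at hps
    linarith
  have hgb := half_norm_le_norm_gb (b := η / κ) (by positivity) hw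
  rw [norm_two_mul_polarMomentum hκ hp] at hw hgb
  have hexp : Real.exp (2 * κ * p * Real.sin φ) ≤ 2 := by
    have : 2 * κ * p * Real.sin φ ≤ 2 * κ * p :=
      mul_le_of_le_one_right (by positivity) (Real.sin_le_one φ)
    rw [← Real.le_log_iff_exp_le two_pos]
    linarith [Real.log_two_gt_d9]
  calc κ / (2 * A * (1 + 1 / (4 * κ)) ^ 2) * (f * L * (1 + p) ^ 2 / p ^ 3) *
      Real.exp (2 * κ * p * Real.sin φ)
      ≤ κ / (2 * A * (1 + 1 / (4 * κ)) ^ 2) * (A * p ^ 4 * (1 + 1 / (4 * κ)) ^ 2 / p ^ 3) * 2 := by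
        gcongr
    _ = 2 * κ * p / 2 := by field_simp
    _ ≤ ‖gb (η / κ) (2 * κ * polarMomentum p φ)‖ := hgb

lemma mul_log_le (hf : 0 < f) (hf1 : f ≤ 1) (p : ℝ) :
    f * Real.log (p ^ 2 + f⁻¹) ≤ p ^ 2 + 1 :=
  calc f * Real.log (p ^ 2 + f⁻¹) ≤ f * (p ^ 2 + f⁻¹) := by
        gcongr
        exact Real.log_le_self (by positivity)
    _ = f * p ^ 2 + 1 := by field_simp
    _ ≤ p ^ 2 + 1 := by nlinarith [sq_nonneg p]

lemma le_norm_gb_of_large {p₀ : ℝ} (hκ : 0 < κ) (hη : 0 < η) (hp₀ : 0 < p₀) (hp : p₀ ≤ p)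
    (hfL₀ : 0 ≤ f * L) (hfL : f * L ≤ p ^ 2 + 1)
    (hy : κ * f * L / p ^ 2 ≤ 2 * κ * p * Real.sin φ) :
    η * κ / (2 * (1 + 1 / p₀) ^ 2 * (1 + 2 * κ * (1 + 1 / p₀ ^ 2))) *
      (f * L * (1 + p) ^ 2 / p ^ 3) * Real.exp (2 * κ * p * Real.sin φ) ≤
        ‖gb (η / κ) (2 * κ * polarMomentum p φ)‖ := by
  have hp' : 0 < p := hp₀.trans_le hp
  have hx : 0 ≤ κ * f * L / p ^ 2 := by rw [mul_assoc]; positivity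
  have hgb := mul_norm_mul_sinh_le_norm_gb (b := η / κ) (w := 2 * κ * polarMomentum p φ)
    (by positivity) (by rw [two_mul_polarMomentum_im]; linarith)
  rw [norm_two_mul_polarMomentum hκ hp', two_mul_polarMomentum_im, neg_neg] at hgb
  have hx' : κ * f * L / p ^ 2 ≤ κ * (1 + 1 / p₀ ^ 2) :=
    calc κ * f * L / p ^ 2 = κ * (f * L / p ^ 2) := by ring
      _ ≤ κ * ((p ^ 2 + 1) / p ^ 2) := by gcongr
      _ = κ * (1 + 1 / p ^ 2) := by field_simp
      _ ≤ κ * (1 + 1 / p₀ ^ 2) := by gcongr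
  have hamp : (1 + p) ^ 2 / p ^ 2 ≤ (1 + 1 / p₀) ^ 2 := by
    rw [← div_pow, add_div, div_self hp'.ne', add_comm]
    gcongr
  have hsinh := exp_mul_div_le_sinh hx hy
  set x := κ * f * L / p ^ 2 with hxdef
  calc η * κ / (2 * (1 + 1 / p₀) ^ 2 * (1 + 2 * κ * (1 + 1 / p₀ ^ 2))) *
      (f * L * (1 + p) ^ 2 / p ^ 3) * Real.exp (2 * κ * p * Real.sin φ)
      = η * p / 2 * (Real.exp (2 * κ * p * Real.sin φ) * (x / (1 + 2 * (κ * (1 + 1 / p₀ ^ 2))))) *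
        ((1 + p) ^ 2 / p ^ 2 / (1 + 1 / p₀) ^ 2) := by
        rw [hxdef]
        field_simp
    _ ≤ η * p / 2 * (Real.exp (2 * κ * p * Real.sin φ) * (x / (1 + 2 * x))) * 1 := by
        gcongr
        exact div_le_one_of_le₀ hamp (by positivity)
    _ ≤ η * p / 2 * Real.sinh (2 * κ * p * Real.sin φ) := by
        rw [mul_one]
        gcongr
    _ = η / κ / 4 * (2 * κ * p) * Real.sinh (2 * κ * p * Real.sin φ) := by
        field_simp
        ring
    _ ≤ ‖gb (η / κ) (2 * κ * polarMomentum p φ)‖ := hgb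

lemma exists_le_norm_gb (hκ : 0 < κ) (hη : 0 < η) (hA : 0 < A) :
    ∃ c > 0, ∀ f p φ L : ℝ, 0 ≤ f * L → f * L ≤ p ^ 2 + 1 → f * L ≤ A * p ^ 4 → 0 < p →
      κ * f * L / p ^ 2 ≤ 2 * κ * p * Real.sin φ →
      c * (f * L * (1 + p) ^ 2 / p ^ 3) * Real.exp (2 * κ * p * Real.sin φ) ≤
        ‖gb (η / κ) (2 * κ * polarMomentum p φ)‖ := by
  set p₀ := 1 / (4 * κ)
  have hp₀ : 0 < p₀ := by positivity
  refine ⟨min (κ / (2 * A * (1 + p₀) ^ 2))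
    (η * κ / (2 * (1 + 1 / p₀) ^ 2 * (1 + 2 * κ * (1 + 1 / p₀ ^ 2)))), by positivity,
    fun f p φ L hfL₀ hfL₁ hfL hp hy => ?_⟩
  rcases le_total p p₀ with hle | hle
  · refine le_trans ?_ (le_norm_gb_of_small hκ hη hp hA hfL hle)
    gcongr
    exact min_le_left _ _
  · refine le_trans ?_ (le_norm_gb_of_large hκ hη hp₀ hle hfL₀ hfL₁ hy)
    gcongr
    exact min_le_right _ _

end LowerBound

section Sector

variable {κ η f p A M : ℝ}

lemma norm_starkLeading_polarMomentum (hp : 0 < p) (κ η f φ : ℝ) :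
    ‖starkLeading κ η f (polarMomentum p φ)‖ = ‖gb (η / κ) (2 * κ * polarMomentum p φ)‖ /
      (2 * p ^ 2 * η ^ 2) * Real.exp (starkPhase κ f (polarMomentum p φ)).re := by
  rw [starkLeading, norm_mul, Complex.norm_exp, norm_div, norm_mul (2 * _), norm_mul 2, norm_pow,
    norm_polarMomentum hp, norm_pow, Complex.norm_two, Complex.norm_real, Real.norm_eq_abs, sq_abs]

lemma one_le_log_sq_add_inv (hf : 0 < f) (hf3 : f ≤ 1 / 3) (p : ℝ) :
    1 ≤ Real.log (p ^ 2 + f⁻¹) := by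
  have h3 : 3 ≤ f⁻¹ := (le_inv_comm₀ three_pos hf).mpr (by rwa [← one_div])
  rw [Real.le_log_iff_exp_le (by positivity)]
  linarith [Real.exp_one_lt_three, sq_nonneg p]

lemma div_pow_three_le {ε : ℝ} (hε : 0 ≤ ε) (hf : 0 ≤ f) (hp : 0 < p) (h : f ≤ A * p ^ 4)
    (hfA : f * A ^ 3 ≤ ε ^ 4) : f / p ^ 3 ≤ ε := by
  have hA : f / p ^ 4 ≤ A := (div_le_iff₀ (by positivity)).mpr h
  refine le_of_pow_le_pow_left₀ four_ne_zero hε ?_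
  calc (f / p ^ 3) ^ 4 = f * (f / p ^ 4) ^ 3 := by field_simp
    _ ≤ f * A ^ 3 := by gcongr
    _ ≤ ε ^ 4 := hfA

lemma div_sq_le {ε : ℝ} (hε : 0 ≤ ε) (hf : 0 ≤ f) (hp : 0 < p) (h : f ≤ A * p ^ 4)
    (hfA : f * A ≤ ε ^ 2) : f / p ^ 2 ≤ ε := by
  have hA : f / p ^ 4 ≤ A := (div_le_iff₀ (by positivity)).mpr h
  refine le_of_sq_le_sq ?_ hε
  calc (f / p ^ 2) ^ 2 = f * (f / p ^ 4) := by field_simp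
    _ ≤ f * A := by gcongr
    _ ≤ ε ^ 2 := hfA

lemma exists_wkbError_polarMomentum_le_half (κ : ℝ) (hA : 0 < A) :
    ∃ f₀ > 0, ∀ f p φ : ℝ, 0 < f → f < f₀ → 0 < p → f ≤ A * p ^ 4 →
      wkbError κ f (polarMomentum p φ) ≤ 1 / 2 := by
  set B := 1800 + 4 * |κ| + 2 * |κ| ^ 3 with hB
  have hB₀ : 0 < B := by positivity
  set ε := 1 / (4 * B) with hε
  have hε₀ : 0 < ε := by positivity
  refine ⟨min (ε ^ 4 / A ^ 3) (ε ^ 2 / A), by positivity, fun f p φ hf hff₀ hp h => ?_⟩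
  have h3 := div_pow_three_le hε₀.le hf.le hp h
    ((le_div_iff₀ (by positivity)).mp (hff₀.le.trans (min_le_left _ _)))
  have h2 := div_sq_le hε₀.le hf.le hp h
    ((le_div_iff₀ hA).mp (hff₀.le.trans (min_le_right _ _)))
  calc wkbError κ f (polarMomentum p φ) = B * (f / p ^ 3 + f / p ^ 2) := by
        rw [wkbError, norm_polarMomentum hp, hB]
        field_simp
    _ ≤ B * (ε + ε) := by gcongr
    _ = 1 / 2 := by rw [hε]; field_simp; norm_num

lemma exists_norm_Df_sub_starkLeading_le (hκ : 0 < κ) (hη : 0 < η) (hA : 0 < A) (hM : 3 ≤ M) :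
    ∃ f₀ ∈ Set.Ioo (0 : ℝ) 1, ∃ C > 0, ∀ f : ℝ, 0 < f → f < f₀ → ∀ p φ : ℝ, 0 < p →
      f * Real.log (p ^ 2 + f⁻¹) ≤ A * p ^ 4 →
      M * f * Real.log (p ^ 2 + f⁻¹) / p ^ 3 ≤ 2 * φ →
      2 * φ ≤ 2 * π / 3 - M * f * Real.log (p ^ 2 + f⁻¹) / p ^ 3 →
      ‖Df κ η f (polarMomentum p φ ^ 2) - starkLeading κ η f (polarMomentum p φ)‖ ≤
        C * ‖starkLeading κ η f (polarMomentum p φ)‖ / Real.log (p ^ 2 + f⁻¹) := by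
  obtain ⟨f₁, hf₁, hE⟩ := exists_wkbError_polarMomentum_le_half κ hA
  obtain ⟨c, hc, hgb⟩ := exists_le_norm_gb hκ hη hA
  have hK : 0 < starkErrorConst κ η := by rw [starkErrorConst]; positivity
  refine ⟨min (1 / 3) f₁, ⟨by positivity, (min_le_left _ _).trans_lt (by norm_num)⟩,
    2 * η ^ 2 * starkErrorConst κ η / c, by positivity, fun f hf hff₀ p φ hp hA' h₁ h₂ => ?_⟩
  have hf3 : f ≤ 1 / 3 := hff₀.le.trans (min_le_left _ _)
  have hL₁ := one_le_log_sq_add_inv hf hf3 p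
  have hfL₁ := mul_log_le hf (hf3.trans (by norm_num)) p
  set L := Real.log (p ^ 2 + f⁻¹) with hL
  have hδ : 0 ≤ M * f * L / p ^ 3 := by positivity
  have hbound := norm_Df_sub_starkLeading_le_of_sector hκ hη hf (hf3.trans (by norm_num)) hp
    (hE f p φ hf (hff₀.trans_le (min_le_right _ _)) hp
      ((le_mul_of_one_le_right hf.le hL₁).trans hA')) hL (by linarith) hM h₁ h₂
  have hlower := hgb f p φ L (by positivity) hfL₁ hA' hp
    (le_two_mul_mul_sin_of_sector hκ hf hp (by linarith) hM h₁ (by linarith))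
  refine hbound.trans ?_
  rw [norm_starkLeading_polarMomentum hp, Real.exp_add]
  set Z := Real.exp (starkPhase κ f (polarMomentum p φ)).re
  set Y := Real.exp (2 * κ * p * Real.sin φ)
  calc starkErrorConst κ η * (f * (1 + p) ^ 2 / p ^ 5) * (Z * Y)
      = starkErrorConst κ η / (c * L * p ^ 2) * (c * (f * L * (1 + p) ^ 2 / p ^ 3) * Y) * Z := by
        field_simp
    _ ≤ starkErrorConst κ η / (c * L * p ^ 2) *
        ‖gb (η / κ) (2 * κ * polarMomentum p φ)‖ * Z := by gcongr
    _ = _ := by field_simp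

end Sector

section Branch

open Complex (I)

variable {a f r : ℝ}

lemma polarMomentum_rpow_half_pow (hr : 0 ≤ r) (θ : ℝ) (n : ℕ) :
    polarMomentum (r ^ ((1 : ℝ) / 2)) (-θ / 2) ^ n =
      ((r ^ ((n : ℝ) / 2) : ℝ) : ℂ) * Complex.exp (n * (I * θ / 2)) := by
  have hpow : (r ^ ((1 : ℝ) / 2)) ^ n = r ^ ((n : ℝ) / 2) := by
    rw [← Real.rpow_mul_natCast hr, one_div_mul_eq_div]
  rw [polarMomentum, mul_pow, ← Complex.ofReal_pow, hpow, ← Complex.exp_nat_mul]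
  push_cast
  ring_nf

lemma starkLeading_polarMomentum_rpow_half (hr : 0 ≤ r) (κ η f θ : ℝ) :
    starkLeading κ η f (polarMomentum (r ^ ((1 : ℝ) / 2)) (-θ / 2)) =
      gb (η / κ) (2 * κ * (((r ^ ((1 : ℝ) / 2) : ℝ) : ℂ) * Complex.exp (I * θ / 2)))
          / (2 * ((r : ℂ) * Complex.exp (I * θ)) * η ^ 2) *
        Complex.exp (I * 4 * (((r ^ ((3 : ℝ) / 2) : ℝ) : ℂ) * Complex.exp (3 * I * θ / 2)) / (3 * f)
          + I * f * κ ^ 2 / (2 * (((r ^ ((1 : ℝ) / 2) : ℝ) : ℂ) * Complex.exp (I * θ / 2)))) := by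
  have h1 := polarMomentum_rpow_half_pow hr θ 1
  have h2 := polarMomentum_rpow_half_pow hr θ 2
  have h3 := polarMomentum_rpow_half_pow hr θ 3
  rw [pow_one, Nat.cast_one, Nat.cast_one, one_mul] at h1
  rw [Nat.cast_ofNat, Nat.cast_ofNat, div_self two_ne_zero, Real.rpow_one,
    mul_div_cancel₀ _ two_ne_zero] at h2
  rw [Nat.cast_ofNat, Nat.cast_ofNat, ← mul_div_assoc, ← mul_assoc] at h3
  rw [← h1, ← h2, ← h3, starkLeading, starkPhase, mul_comm I 4]

lemma mul_log_add_inv_le_of_rpow_lt (ha : a < 1 / 2) (hf : 0 < f) (hf1 : f < 1) (hr : f ^ a < r) :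
    f * Real.log (r + f⁻¹) ≤ (1 + 1 / (1 - 2 * a)) * r ^ 2 := by
  have hr₀ : 0 < r := (Real.rpow_pos_of_pos hf a).trans hr
  have hb : 0 < 1 - 2 * a := by linarith
  have hpow : f * f⁻¹ ^ (1 - 2 * a) = (f ^ a) ^ 2 := by
    rw [Real.inv_rpow hf.le, ← Real.rpow_neg hf.le, ← Real.rpow_mul_natCast hf.le, mul_comm,
      ← Real.rpow_add_one hf.ne']
    push_cast
    ring_nf
  have hfr : f ^ 2 ≤ r := by
    rw [← Real.rpow_two]
    exact (Real.rpow_le_rpow_of_exponent_ge hf hf1.le (by linarith)).trans hr.le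
  have hlog : Real.log (r + f⁻¹) ≤ f⁻¹ ^ (1 - 2 * a) / (1 - 2 * a) + f * r := by
    have hsum : r + f⁻¹ = f⁻¹ * (1 + f * r) := by field_simp; ring
    rw [hsum, Real.log_mul (by positivity) (by positivity)]
    refine add_le_add (Real.log_le_rpow_div (by positivity) hb) ?_
    linarith [Real.log_le_sub_one_of_pos (show 0 < 1 + f * r by positivity)]
  calc f * Real.log (r + f⁻¹) ≤ f * (f⁻¹ ^ (1 - 2 * a) / (1 - 2 * a) + f * r) := by gcongr
    _ = f ^ 2 * r + (f ^ a) ^ 2 / (1 - 2 * a) := by rw [← hpow]; ring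
    _ ≤ r * r + r ^ 2 / (1 - 2 * a) := by gcongr
    _ = (1 + 1 / (1 - 2 * a)) * r ^ 2 := by ring

end Branch

theorem stmt9_general (κ η A M : ℝ) (hκ : 0 < κ) (hη : 0 < η) (hA : 0 < A) (hM : 3 ≤ M) :
    ∃ f₀ ∈ Set.Ioo (0 : ℝ) 1, ∃ C > (0 : ℝ), ∀ f : ℝ, 0 < f → f < f₀ → ∀ r θ : ℝ, 0 < r →
      f * Real.log (r + f⁻¹) ≤ A * r ^ 2 →
      -(2 * π / 3) + r ^ (-(3 : ℝ) / 2) * M * f * Real.log (r + f⁻¹) < θ →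
      θ < -(r ^ (-(3 : ℝ) / 2) * M * f * Real.log (r + f⁻¹)) →
      ‖(Df κ η f ((r : ℂ) * Complex.exp (Complex.I * θ)) -
          gb (η / κ) (2 * κ * (((r ^ ((1 : ℝ) / 2) : ℝ) : ℂ) * Complex.exp (Complex.I * θ / 2)))
            / (2 * ((r : ℂ) * Complex.exp (Complex.I * θ)) * η ^ 2) *
            Complex.exp (Complex.I * 4 *
                (((r ^ ((3 : ℝ) / 2) : ℝ) : ℂ) * Complex.exp (3 * Complex.I * θ / 2)) / (3 * f)
              + Complex.I * f * κ ^ 2 /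
                (2 * (((r ^ ((1 : ℝ) / 2) : ℝ) : ℂ) * Complex.exp (Complex.I * θ / 2)))))‖ ≤
        C * ‖(gb (η / κ)
              (2 * κ * (((r ^ ((1 : ℝ) / 2) : ℝ) : ℂ) * Complex.exp (Complex.I * θ / 2)))
            / (2 * ((r : ℂ) * Complex.exp (Complex.I * θ)) * η ^ 2) *
            Complex.exp (Complex.I * 4 *
                (((r ^ ((3 : ℝ) / 2) : ℝ) : ℂ) * Complex.exp (3 * Complex.I * θ / 2)) / (3 * f)
              + Complex.I * f * κ ^ 2 /
                (2 * (((r ^ ((1 : ℝ) / 2) : ℝ) : ℂ) * Complex.exp (Complex.I * θ / 2)))))‖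
          / Real.log (r + f⁻¹) := by
  obtain ⟨f₀, hf₀, C, hC, h⟩ := exists_norm_Df_sub_starkLeading_le hκ hη hA hM
  refine ⟨f₀, hf₀, C, hC, fun f hf hff₀ r θ hr hA' hθ₁ hθ₂ => ?_⟩
  have hp2 : (r ^ ((1 : ℝ) / 2)) ^ 2 = r := by
    rw [← Real.rpow_mul_natCast hr.le]
    norm_num
  have hp3 : r ^ (-(3 : ℝ) / 2) = ((r ^ ((1 : ℝ) / 2)) ^ 3)⁻¹ := by
    rw [← Real.rpow_mul_natCast hr.le, ← Real.rpow_neg hr.le]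
    norm_num
  have hq2 : polarMomentum (r ^ ((1 : ℝ) / 2)) (-θ / 2) ^ 2 = r * Complex.exp (Complex.I * θ) := by
    rw [polarMomentum_rpow_half_pow hr.le, Nat.cast_ofNat, Nat.cast_ofNat, div_self two_ne_zero,
      Real.rpow_one, mul_div_cancel₀ _ two_ne_zero]
  have hδ : M * f * Real.log (r + f⁻¹) / (r ^ ((1 : ℝ) / 2)) ^ 3 =
      r ^ (-(3 : ℝ) / 2) * M * f * Real.log (r + f⁻¹) := by
    rw [hp3]
    ring
  have hbound := h f hf hff₀ (r ^ ((1 : ℝ) / 2)) (-θ / 2) (by positivity)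
    (by rw [pow_mul _ 2 2, hp2]; exact hA') (by rw [hp2]; linarith) (by rw [hp2]; linarith)
  rwa [hp2, hq2, starkLeading_polarMomentum_rpow_half hr.le] at hbound

/-- Approximation of `D_f` by
`F₁(z) = (g_{η/κ}(2κ√z)/(2zη²))·exp(i4z^{3/2}/(3f) + ifκ²/(2√z))` in the
region `R₁`, with relative error `O(1/log(r + f⁻¹))`; the half powers are
taken with the branch `z^{1/2} = r^{1/2}e^{iθ/2}`, `z^{3/2} = r^{3/2}e^{3iθ/2}`. -/
theorem stmt9 (κ η : ℝ) (hκ : 0 < κ) (hη : 0 < η) (a M : ℝ)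
    (ha0 : 0 < a) (ha1 : a < 1 / 2) (hM : 20 < M) :
    ∃ f₀ > (0 : ℝ), ∃ C > (0 : ℝ), ∀ f : ℝ, 0 < f → f < f₀ → ∀ r θ : ℝ,
      f ^ a < r →
      -(2 * π / 3) + r ^ (-(3 : ℝ) / 2) * M * f * Real.log (r + f⁻¹) < θ →
      θ < -(r ^ (-(3 : ℝ) / 2) * M * f * Real.log (r + f⁻¹)) →
      ‖(Df κ η f ((r : ℂ) * Complex.exp (Complex.I * θ)) -
          gb (η / κ) (2 * κ * (((r ^ ((1 : ℝ) / 2) : ℝ) : ℂ) * Complex.exp (Complex.I * θ / 2)))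
            / (2 * ((r : ℂ) * Complex.exp (Complex.I * θ)) * η ^ 2) *
            Complex.exp (Complex.I * 4 *
                (((r ^ ((3 : ℝ) / 2) : ℝ) : ℂ) * Complex.exp (3 * Complex.I * θ / 2)) / (3 * f)
              + Complex.I * f * κ ^ 2 /
                (2 * (((r ^ ((1 : ℝ) / 2) : ℝ) : ℂ) * Complex.exp (Complex.I * θ / 2)))))‖ ≤
        C * ‖(gb (η / κ)
              (2 * κ * (((r ^ ((1 : ℝ) / 2) : ℝ) : ℂ) * Complex.exp (Complex.I * θ / 2)))
            / (2 * ((r : ℂ) * Complex.exp (Complex.I * θ)) * η ^ 2) *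
            Complex.exp (Complex.I * 4 *
                (((r ^ ((3 : ℝ) / 2) : ℝ) : ℂ) * Complex.exp (3 * Complex.I * θ / 2)) / (3 * f)
              + Complex.I * f * κ ^ 2 /
                (2 * (((r ^ ((1 : ℝ) / 2) : ℝ) : ℂ) * Complex.exp (Complex.I * θ / 2)))))‖
          / Real.log (r + f⁻¹) := by
  have hb : 0 < 1 - 2 * a := by linarith
  obtain ⟨f₀, ⟨hf₀, hf₀₁⟩, C, hC, h⟩ :=
    stmt9_general κ η (1 + 1 / (1 - 2 * a)) M hκ hη (by positivity) (by linarith)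
  exact ⟨f₀, hf₀, C, hC, fun f hf hff₀ r θ hr =>
    h f hf hff₀ r θ ((Real.rpow_pos_of_pos hf a).trans hr)
      (mul_log_add_inv_le_of_rpow_lt ha1 hf (hff₀.trans hf₀₁) hr)⟩
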